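/- arXiv:math/0602057 — 2 statements merged into one kernel-verified Lean document; each statement's English description precedes it below -/
import Mathlib

section
/- Let n ≥ 4, set ν = (n−2)/2, and let ψ ∈ C₀^∞((0,+∞)). For 0 < h ≤ 1, σ > 0 and t ∈ ℝ define K_h(σ,t) = (2π)^{-ν-1} σ^{-2ν} ∫₀^∞ e^{itλ²} ψ(h²λ²) 𝒥_ν(σλ) λ dλ, where 𝒥_ν(z) = z^ν J_ν(z) and J_ν is the Bessel function of the first kind of order ν (so that K_h(|x−y|,t) is the integral kernel of e^{itG₀}ψ(h²G₀)). Then for every 0 ≤ s ≤ (n−1)/2 there exists a constant C > 0 such that |K_h(σ,t)| ≤ C h^{s-(n-1)/2} |t|^{-s-1/2} σ^{-(n-1)/2+s} for all t ≠ 0, all σ > 0 and all 0 < h ≤ 1. -/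
/-!
With `x = hλ`, `T = t / h²` and `ρ = σ / h`, the kernel is a constant times `h^{-n}` times
`g(T, ρ) = ∫ e^{iTx²} f(x) j(ρx) dx`, where `f` is smooth with support in some `[m, M] ⊆ (0, ∞)`
and `j(z) = ∫_{-1}^1 (1 - u²)^α cos (zu) du`, `α = ν - 1/2`, is Poisson's integral for
`z^{-ν} J_ν(z)`. The claim becomes `|g(T, ρ)| ≤ C |T|^{-s-1/2} ρ^{s-(n-1)/2}`, and it is
interpolated from three bounds.

* Trivially, `g` is bounded.
* If `ρ ≤ m |T|`, none of the phases `Tx² + ρux`, `|u| ≤ 1`, is stationary on `[m, M]`, so `g`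
  decays faster than any power of `|T|`.
* If `ρ ≥ m`, then `|g(T, ρ)| ≤ C |T|^{-1/2} ρ^{-(n-1)/2}`. Indeed `W(z) = z^{α+1} j(z)` solves
  `W″ = (α (α + 1) / z² - 1) W`, and an energy estimate bounds `W` and `W′` at infinity; hence
  `W(z) = e^{iz} A₊(z) + e^{-iz} A₋(z)` with `A_± = O(1)` and `A_±′ = O(1/z)`. Van der Corput's
  estimate for the phases `Tx² ± ρx`, which is uniform in the linear term, gives the bound.
-/

open MeasureTheory Filter Topology Real Set

noncomputable section

/-- The Bessel function of the first kind of (real) order `ν`, for `z > 0`: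
`J_ν(z) = ∑_{k≥0} (-1)^k / (k! Γ(k+ν+1)) (z/2)^{2k+ν}`. -/
def besselJ (ν : ℝ) (z : ℝ) : ℝ :=
  ∑' k : ℕ, ((-1 : ℝ) ^ k / (Nat.factorial k * Real.Gamma ((k : ℝ) + ν + 1))) *
    (z / 2) ^ ((2 * k : ℝ) + ν)

/-- `𝒥_ν(z) = z^ν J_ν(z)`. -/
def calJ (ν : ℝ) (z : ℝ) : ℝ := z ^ ν * besselJ ν z

/-- A real-valued function of class `C₀^∞((0,+∞))`. -/
def IsCutoff (ψ : ℝ → ℝ) : Prop :=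
  ContDiff ℝ (⊤ : ℕ∞) ψ ∧ HasCompactSupport ψ ∧ tsupport ψ ⊆ Set.Ioi 0

/-- The kernel `K_h(σ,t)` of the free propagator `e^{itG₀} ψ(h²G₀)` in dimension `n`,
with `ν = (n−2)/2`:
`K_h(σ,t) = (2π)^{-ν-1} σ^{-2ν} ∫₀^∞ e^{itλ²} ψ(h²λ²) 𝒥_ν(σλ) λ dλ`. -/
def freeKernel (n : ℕ) (ψ : ℝ → ℝ) (h σ t : ℝ) : ℂ :=
  ((2 * Real.pi) ^ (-(((n : ℝ) - 2) / 2) - 1) * σ ^ (-2 * (((n : ℝ) - 2) / 2)) : ℝ) *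
    ∫ lam in Set.Ioi (0 : ℝ),
      Complex.exp (Complex.I * t * lam ^ 2) * ((ψ (h ^ 2 * lam ^ 2) : ℝ) : ℂ) *
        ((calJ (((n : ℝ) - 2) / 2) (σ * lam) : ℝ) : ℂ) * (lam : ℂ)

/-! ### Poisson's integral -/

/-- Poisson's integral `∫_{-1}^1 (1 - u²)^α cos (zu) du`. For `ν = α + 1/2` it is a constant
multiple of `z^{-ν} J_ν(z)`. -/
def poissonIntegral (α z : ℝ) : ℝ := ∫ u in (-1 : ℝ)..1, (1 - u ^ 2) ^ α * cos (z * u)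

/-- The even moments of the weight `(1 - u²)^α` on `[-1, 1]`. -/
def weightMoment (α : ℝ) (k : ℕ) : ℝ := ∫ u in (-1 : ℝ)..1, (1 - u ^ 2) ^ α * u ^ (2 * k)

section Poisson

variable {α : ℝ}

lemma intervalIntegrable_weight (hα : -1 < α) :
    IntervalIntegrable (fun u : ℝ => (1 - u ^ 2) ^ α) volume (-1) 1 := by
  have left : IntervalIntegrable (fun u : ℝ => (1 - u ^ 2) ^ α) volume (-1) 0 := by
    have hsing : IntervalIntegrable (fun u : ℝ => (u + 1) ^ α) volume (-1) 0 := by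
      simpa using (intervalIntegral.intervalIntegrable_rpow' (a := 0) (b := 1) hα).comp_add_right 1
    have hreg : ContinuousOn (fun u : ℝ => (1 - u) ^ α) (uIcc (-1) 0) := by
      refine ContinuousOn.rpow_const (by fun_prop) fun u hu => Or.inl ?_
      rw [uIcc_of_le (by norm_num)] at hu
      linarith [hu.2]
    refine (hsing.mul_continuousOn hreg).congr fun u hu => ?_
    rw [uIoc_of_le (by norm_num)] at hu
    change (u + 1) ^ α * (1 - u) ^ α = _
    rw [← mul_rpow (by linarith [hu.1]) (by linarith [hu.2])]
    ring_nf
  have right : IntervalIntegrable (fun u : ℝ => (1 - u ^ 2) ^ α) volume 0 1 := by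
    simpa using left.comp_sub_left 0 |>.symm
  exact left.trans right

lemma intervalIntegrable_weight_mul (hα : -1 < α) {g : ℝ → ℝ} (hg : Continuous g) :
    IntervalIntegrable (fun u : ℝ => (1 - u ^ 2) ^ α * g u) volume (-1) 1 :=
  (intervalIntegrable_weight hα).mul_continuousOn hg.continuousOn

lemma weight_nonneg {u : ℝ} (hu : u ∈ Icc (-1 : ℝ) 1) : 0 ≤ (1 - u ^ 2) ^ α :=
  rpow_nonneg (by nlinarith [hu.1, hu.2]) α

lemma weight_add_one (hα : -1 < α) {u : ℝ} (hu : u ∈ Icc (-1 : ℝ) 1) :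
    (1 - u ^ 2) ^ (α + 1) = (1 - u ^ 2) ^ α * (1 - u ^ 2) :=
  rpow_add_one' (by nlinarith [hu.1, hu.2]) (by linarith)

lemma integral_weight_add_one_mul (hα : -1 < α) {g : ℝ → ℝ} (hg : Continuous g) :
    ∫ u in (-1 : ℝ)..1, (1 - u ^ 2) ^ (α + 1) * g u =
      (∫ u in (-1 : ℝ)..1, (1 - u ^ 2) ^ α * g u) -
        ∫ u in (-1 : ℝ)..1, (1 - u ^ 2) ^ α * (u ^ 2 * g u) := by
  rw [← intervalIntegral.integral_sub (intervalIntegrable_weight_mul hα hg)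
    (intervalIntegrable_weight_mul hα (by fun_prop))]
  refine intervalIntegral.integral_congr fun u hu => ?_
  rw [uIcc_of_le (by norm_num)] at hu
  simp only [weight_add_one hα hu]
  ring

lemma hasDerivAt_weight_add_one {u : ℝ} (hu : u ∈ Ioo (-1 : ℝ) 1) :
    HasDerivAt (fun u : ℝ => (1 - u ^ 2) ^ (α + 1)) (-(2 * (α + 1)) * ((1 - u ^ 2) ^ α * u)) u := by
  have hpos : 0 < 1 - u ^ 2 := by nlinarith [hu.1, hu.2]
  refine (((hasDerivAt_pow 2 u).const_sub 1).rpow_const (p := α + 1)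
    (Or.inl hpos.ne')).congr_deriv ?_
  rw [add_sub_cancel_right]
  push_cast
  ring

/-- The boundary terms vanish because `(1 - u²)^{α+1}` is zero at `u = ±1`. -/
lemma integral_weight_add_one_mul_deriv (hα : -1 < α) {f f' : ℝ → ℝ}
    (hf : ∀ u, HasDerivAt f (f' u) u) (hf' : Continuous f') :
    ∫ u in (-1 : ℝ)..1, (1 - u ^ 2) ^ (α + 1) * f' u =
      2 * (α + 1) * ∫ u in (-1 : ℝ)..1, (1 - u ^ 2) ^ α * (u * f u) := by
  have hw : Continuous fun u : ℝ => (1 - u ^ 2) ^ (α + 1) :=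
    Continuous.rpow_const (by fun_prop) fun _ => Or.inr (by linarith)
  have hfc : Continuous f := continuous_iff_continuousAt.2 fun u => (hf u).continuousAt
  have parts := intervalIntegral.integral_mul_deriv_eq_deriv_mul_of_hasDerivAt (a := -1) (b := 1)
    hw.continuousOn hfc.continuousOn
    (fun u hu => hasDerivAt_weight_add_one (by simpa using hu)) (fun u _ => hf u)
    ((intervalIntegrable_weight_mul hα continuous_id).const_mul _) (hf'.intervalIntegrable _ _)
  rw [parts, ← intervalIntegral.integral_const_mul]
  simp only [neg_sq, one_pow, sub_self, zero_rpow (by linarith : α + 1 ≠ 0), zero_mul, zero_sub]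
  rw [← intervalIntegral.integral_neg]
  congr 1 with u
  ring

lemma hasDerivAt_integral_mul_comp_mul {a b C : ℝ} {k φ φ' : ℝ → ℝ}
    (hk : IntervalIntegrable k volume a b) (hφ : ∀ x, HasDerivAt φ (φ' x) x)
    (hφ' : Continuous φ') (hC : ∀ x, |φ' x| ≤ C) (z : ℝ) :
    HasDerivAt (fun z => ∫ u in a..b, k u * φ (z * u)) (∫ u in a..b, k u * (u * φ' (z * u))) z := by
  have hφc : Continuous φ := continuous_iff_continuousAt.2 fun x => (hφ x).continuousAt
  have hint : ∀ {g : ℝ → ℝ}, Continuous g → IntervalIntegrable (fun u => k u * g u) volume a b :=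
    fun hg => hk.mul_continuousOn hg.continuousOn
  refine (intervalIntegral.hasDerivAt_integral_of_dominated_loc_of_deriv_le
    (F := fun z u => k u * φ (z * u)) (F' := fun z u => k u * (u * φ' (z * u)))
    (bound := fun u => |k u * u| * C) univ_mem ?_ ?_ ?_ ?_ ?_ ?_).2
  · exact Eventually.of_forall fun z =>
      (hint (g := fun u => φ (z * u)) (by fun_prop)).aestronglyMeasurable_restrict_uIoc
  · exact hint (by fun_prop)
  · exact (hint (g := fun u => u * φ' (z * u)) (by fun_prop)).aestronglyMeasurable_restrict_uIoc
  · refine Eventually.of_forall fun u _ z _ => ?_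
    rw [← mul_assoc, norm_mul, norm_eq_abs, norm_eq_abs]
    gcongr
    exact hC _
  · exact (hint continuous_id).abs.mul_const C
  · exact Eventually.of_forall fun u _ z _ =>
      (((hφ (z * u)).comp z (hasDerivAt_mul_const u)).const_mul (k u)).congr_deriv (by ring)

lemma mul_poissonIntegral_add_one (hα : -1 < α) (z : ℝ) :
    z * poissonIntegral (α + 1) z =
      2 * (α + 1) * ∫ u in (-1 : ℝ)..1, (1 - u ^ 2) ^ α * (u * sin (z * u)) := by
  have parts := integral_weight_add_one_mul_deriv hα (f := fun u => sin (z * u))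
    (f' := fun u => z * cos (z * u))
    (fun u => ((hasDerivAt_sin (z * u)).comp u (hasDerivAt_const_mul z)).congr_deriv (mul_comm _ _))
    (by fun_prop)
  rw [← parts, poissonIntegral, ← intervalIntegral.integral_const_mul]
  congr 1 with u
  ring

/-- In terms of `J_ν` this is `(z^{-ν} J_ν)′ = -z^{-ν} J_{ν+1}`. -/
lemma hasDerivAt_poissonIntegral (hα : -1 < α) (z : ℝ) :
    HasDerivAt (poissonIntegral α) (-(z * poissonIntegral (α + 1) z) / (2 * (α + 1))) z := by
  refine (hasDerivAt_integral_mul_comp_mul (C := 1) (intervalIntegrable_weight hα)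
    (φ' := fun x => -sin x) hasDerivAt_cos (by fun_prop) (fun x => ?_) z).congr_deriv ?_
  · rw [abs_neg]
    exact abs_sin_le_one x
  · have : α + 1 ≠ 0 := by linarith
    rw [mul_poissonIntegral_add_one hα, neg_div, mul_div_cancel_left₀ _ (by positivity),
      ← intervalIntegral.integral_neg]
    congr 1 with u
    ring

/-- In terms of `J_ν` this is the recurrence `(z^{ν+1} J_{ν+1})′ = z^{ν+1} J_ν`. -/
lemma hasDerivAt_mul_poissonIntegral_add_one (hα : -1 < α) (z : ℝ) :
    HasDerivAt (fun z => z * poissonIntegral (α + 1) z)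
      (2 * (α + 1) * (poissonIntegral α z - poissonIntegral (α + 1) z)) z := by
  simp only [mul_poissonIntegral_add_one hα, ← mul_assoc ((1 - _ ^ 2 : ℝ) ^ α)]
  refine ((hasDerivAt_integral_mul_comp_mul (C := 1)
    (intervalIntegrable_weight_mul hα continuous_id) hasDerivAt_sin continuous_cos
    abs_cos_le_one z).const_mul (2 * (α + 1))).congr_deriv ?_
  rw [poissonIntegral, poissonIntegral, integral_weight_add_one_mul hα (by fun_prop),
    sub_sub_cancel]
  congr 2 with u
  simp only [id]
  ring

lemma intervalIntegrable_ofReal {f : ℝ → ℝ} {a b : ℝ} (hf : IntervalIntegrable f volume a b) :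
    IntervalIntegrable (fun x => (f x : ℂ)) volume a b :=
  ⟨hf.1.ofReal, hf.2.ofReal⟩

lemma ofReal_poissonIntegral (hα : -1 < α) (z : ℝ) :
    (poissonIntegral α z : ℂ) =
      ∫ u in (-1 : ℝ)..1, (((1 - u ^ 2) ^ α : ℝ) : ℂ) * Complex.exp ((z * u : ℝ) * Complex.I) := by
  have hodd : ∫ u in (-1 : ℝ)..1, (1 - u ^ 2) ^ α * sin (z * u) = 0 := by
    have := intervalIntegral.integral_comp_neg (a := -1) (b := 1)
      fun u : ℝ => (1 - u ^ 2) ^ α * sin (z * u)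
    simp only [neg_sq, mul_neg, sin_neg, intervalIntegral.integral_neg, neg_neg] at this
    linarith
  have hcos := intervalIntegrable_weight_mul hα (g := fun u => cos (z * u)) (by fun_prop)
  have hsin := intervalIntegrable_weight_mul hα (g := fun u => sin (z * u)) (by fun_prop)
  calc (poissonIntegral α z : ℂ)
      = (poissonIntegral α z : ℂ) +
          ((∫ u in (-1 : ℝ)..1, (1 - u ^ 2) ^ α * sin (z * u) : ℝ) : ℂ) * Complex.I := by
        simp [hodd]
    _ = _ := by
      rw [poissonIntegral, ← intervalIntegral.integral_ofReal, ← intervalIntegral.integral_ofReal,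
        ← intervalIntegral.integral_mul_const,
        ← intervalIntegral.integral_add (intervalIntegrable_ofReal hcos)
          ((intervalIntegrable_ofReal hsin).mul_const _)]
      congr 1 with u
      rw [Complex.exp_mul_I]
      push_cast
      ring

lemma norm_integral_weight_mul_le (hα : -1 < α) {E : ℝ → ℂ} {C : ℝ}
    (hE : ∀ u ∈ Icc (-1 : ℝ) 1, ‖E u‖ ≤ C) :
    ‖∫ u in (-1 : ℝ)..1, (((1 - u ^ 2) ^ α : ℝ) : ℂ) * E u‖ ≤ weightMoment α 0 * C := by
  simp only [weightMoment, mul_zero, pow_zero, mul_one]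
  rw [← intervalIntegral.integral_mul_const]
  refine intervalIntegral.norm_integral_le_of_norm_le (by norm_num)
    (Eventually.of_forall fun u hu => ?_) ((intervalIntegrable_weight hα).mul_const C)
  have hu' := Ioc_subset_Icc_self hu
  rw [norm_mul, Complex.norm_real, norm_of_nonneg (weight_nonneg hu')]
  exact mul_le_mul_of_nonneg_left (hE u hu') (weight_nonneg hu')

lemma abs_poissonIntegral_le (hα : -1 < α) (z : ℝ) : |poissonIntegral α z| ≤ weightMoment α 0 := by
  rw [← norm_eq_abs, ← Complex.norm_real, ofReal_poissonIntegral hα]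
  simpa only [mul_one] using norm_integral_weight_mul_le hα (C := 1)
    fun u _ => (Complex.norm_exp_ofReal_mul_I (z * u)).le

lemma weightMoment_zero_pos (hα : -1 < α) : 0 < weightMoment α 0 := by
  refine intervalIntegral.intervalIntegral_pos_of_pos_on
    (intervalIntegrable_weight_mul hα (by fun_prop)) (fun u hu => ?_) (by norm_num)
  have : 0 < 1 - u ^ 2 := by nlinarith [hu.1, hu.2]
  simp only [mul_zero, pow_zero, mul_one]
  positivity

lemma weightMoment_succ (hα : -1 < α) (k : ℕ) :
    (2 * k + 2 * α + 3) * weightMoment α (k + 1) = (2 * k + 1) * weightMoment α k := by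
  have parts := integral_weight_add_one_mul_deriv hα (f := fun u => u ^ (2 * k + 1))
    (f' := fun u => (2 * k + 1) * u ^ (2 * k))
    (fun u => by simpa using hasDerivAt_pow (2 * k + 1) u) (by fun_prop)
  have lower : ∫ u in (-1 : ℝ)..1, (1 - u ^ 2) ^ (α + 1) * ((2 * k + 1) * u ^ (2 * k)) =
      (2 * k + 1) * (weightMoment α k - weightMoment α (k + 1)) := by
    simp only [mul_left_comm _ (2 * (k : ℝ) + 1)]
    rw [intervalIntegral.integral_const_mul, integral_weight_add_one_mul hα (by fun_prop)]
    simp only [weightMoment, mul_add, pow_add, mul_comm (_ ^ 2 : ℝ) (_ ^ (2 * k) : ℝ), mul_one]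
  have raise : ∫ u in (-1 : ℝ)..1, (1 - u ^ 2) ^ α * (u * u ^ (2 * k + 1)) =
      weightMoment α (k + 1) := by
    simp only [weightMoment, ← pow_succ']
    rfl
  rw [lower, raise] at parts
  linarith

lemma hasSum_poissonIntegral (hα : -1 < α) (z : ℝ) :
    HasSum (fun k : ℕ => (-1) ^ k * z ^ (2 * k) / (2 * k).factorial * weightMoment α k)
      (poissonIntegral α z) := by
  have hterm : ∀ k : ℕ, (-1) ^ k * z ^ (2 * k) / (2 * k).factorial * weightMoment α k =
      ∫ u in (-1 : ℝ)..1, (1 - u ^ 2) ^ α * ((-1) ^ k * (z * u) ^ (2 * k) / (2 * k).factorial) := by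
    intro k
    rw [weightMoment, ← intervalIntegral.integral_const_mul]
    congr 1 with u
    ring
  simp only [hterm]
  refine intervalIntegral.hasSum_integral_of_dominated_convergence
    (fun k u => |(1 - u ^ 2) ^ α| * (|z| ^ (2 * k) / (2 * k).factorial))
    (fun k => (intervalIntegrable_weight_mul hα
      (g := fun u => (-1) ^ k * (z * u) ^ (2 * k) / (2 * k).factorial)
      (by fun_prop)).aestronglyMeasurable_restrict_uIoc)
    (fun k => Eventually.of_forall fun u hu => ?_)
    (Eventually.of_forall fun u _ => (hasSum_cosh |z|).summable.mul_left _)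
    ?_ (Eventually.of_forall fun u _ => (hasSum_cos (z * u)).mul_left _)
  · rw [uIoc_of_le (by norm_num)] at hu
    have hu1 : |u| ≤ 1 := abs_le.2 ⟨hu.1.le, hu.2⟩
    simp only [norm_mul, norm_div, norm_pow, norm_eq_abs, abs_neg, abs_one, one_pow, one_mul,
      Nat.abs_cast, mul_pow]
    gcongr
    exact mul_le_of_le_one_right (by positivity) (pow_le_one₀ (abs_nonneg _) hu1)
  · simp only [tsum_mul_left]
    exact (intervalIntegrable_weight hα).abs.mul_const _

/-- Both sides satisfy the same recursion in `k`. -/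
lemma besselJ_coeff_eq (hα : -1 < α) (k : ℕ) :
    (-1 : ℝ) ^ k / (k.factorial * Gamma (k + (α + 1 / 2) + 1)) * (1 / 2) ^ (2 * k) =
      (Gamma (α + 3 / 2) * weightMoment α 0)⁻¹ *
        ((-1) ^ k / (2 * k).factorial * weightMoment α k) := by
  have hM := (weightMoment_zero_pos hα).ne'
  have := (Gamma_pos_of_pos (by linarith : 0 < α + 3 / 2)).ne'
  induction k with
  | zero =>
    rw [show ((0 : ℕ) : ℝ) + (α + 1 / 2) + 1 = α + 3 / 2 by push_cast; ring]
    simp only [pow_zero, Nat.factorial_zero, mul_zero, Nat.cast_one, one_mul]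
    field_simp
  | succ k ih =>
    have hν : 0 < (k : ℝ) + (α + 1 / 2) + 1 := by linarith [k.cast_nonneg (α := ℝ)]
    have hα' : 0 < 2 * (k : ℝ) + 2 * α + 3 := by linarith
    have := (Gamma_pos_of_pos hν).ne'
    have hmoment : weightMoment α (k + 1) =
        (2 * k + 1) * weightMoment α k / (2 * k + 2 * α + 3) := by
      rw [← weightMoment_succ hα, mul_div_cancel_left₀ _ hα'.ne']
    have hfact : ((2 * (k + 1)).factorial : ℝ) = (2 * k + 2) * (2 * k + 1) * (2 * k).factorial := by
      rw [mul_add, mul_one, Nat.factorial_succ, Nat.factorial_succ]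
      push_cast
      ring
    have hshift : ((k + 1 : ℕ) : ℝ) + (α + 1 / 2) + 1 = (k + (α + 1 / 2) + 1) + 1 := by
      push_cast
      ring
    calc (-1 : ℝ) ^ (k + 1) / ((k + 1).factorial * Gamma ((k + 1 : ℕ) + (α + 1 / 2) + 1)) *
          (1 / 2) ^ (2 * (k + 1))
        = (-1 : ℝ) ^ k / (k.factorial * Gamma (k + (α + 1 / 2) + 1)) * (1 / 2) ^ (2 * k) *
            (-1 / (2 * (k + 1) * (2 * k + 2 * α + 3))) := by
          rw [hshift, Gamma_add_one hν.ne', Nat.factorial_succ]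
          push_cast
          field_simp
          ring
      _ = _ := by
          rw [ih, hmoment, hfact]
          field_simp
          ring

lemma besselJ_eq_poissonIntegral (hα : -1 < α) {z : ℝ} (hz : 0 < z) :
    besselJ (α + 1 / 2) z =
      (z / 2) ^ (α + 1 / 2) * (Gamma (α + 3 / 2) * weightMoment α 0)⁻¹ * poissonIntegral α z := by
  rw [besselJ, ← (hasSum_poissonIntegral hα z).tsum_eq, ← tsum_mul_left]
  congr 1 with k
  have hpow : (z / 2) ^ (2 * (k : ℝ) + (α + 1 / 2)) =
      z ^ (2 * k) * (1 / 2) ^ (2 * k) * (z / 2) ^ (α + 1 / 2) := by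
    rw [rpow_add (by positivity), ← mul_pow, ← rpow_natCast, mul_one_div]
    push_cast
    rfl
  rw [hpow]
  linear_combination z ^ (2 * k) * (z / 2) ^ (α + 1 / 2) * besselJ_coeff_eq hα k

lemma calJ_eq_poissonIntegral (hα : -1 < α) {z : ℝ} (hz : 0 < z) :
    calJ (α + 1 / 2) z = (1 / 2) ^ (α + 1 / 2) * (Gamma (α + 3 / 2) * weightMoment α 0)⁻¹ *
      z ^ (2 * α + 1) * poissonIntegral α z := by
  have hsq : z ^ (2 * α + 1) = z ^ (α + 1 / 2) * z ^ (α + 1 / 2) := by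
    rw [← rpow_add hz]
    ring_nf
  rw [calJ, besselJ_eq_poissonIntegral hα hz, div_eq_mul_one_div z,
    mul_rpow hz.le (by norm_num), hsq]
  ring

end Poisson

/-! ### Quadratic phases -/

/-- The oscillating factor `e^{i(Tx² + yx)}`. -/
def quadPhase (T y x : ℝ) : ℂ := Complex.exp ((T * x ^ 2 + y * x : ℝ) * Complex.I)

section QuadPhase

variable {T y a b : ℝ} {g g' : ℝ → ℂ}

lemma norm_quadPhase (T y x : ℝ) : ‖quadPhase T y x‖ = 1 :=
  Complex.norm_exp_ofReal_mul_I _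

@[fun_prop]
lemma continuous_quadPhase (T y : ℝ) : Continuous (quadPhase T y) := by
  unfold quadPhase
  fun_prop

lemma quadPhase_eq_mul_exp (T y x : ℝ) :
    quadPhase T y x = quadPhase T 0 x * Complex.exp ((y * x : ℝ) * Complex.I) := by
  rw [quadPhase, quadPhase, ← Complex.exp_add]
  push_cast
  ring_nf

lemma quadPhase_neg (T y x : ℝ) : quadPhase (-T) (-y) x = starRingEnd ℂ (quadPhase T y x) := by
  rw [quadPhase, quadPhase, ← Complex.exp_conj, map_mul, Complex.conj_I, Complex.conj_ofReal]
  push_cast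
  ring_nf

lemma hasDerivAt_quadPhase (T y x : ℝ) :
    HasDerivAt (quadPhase T y) (Complex.I * (2 * T * x + y : ℝ) * quadPhase T y x) x := by
  have hphase : HasDerivAt (fun x : ℝ => T * x ^ 2 + y * x) (2 * T * x + y) x :=
    (((hasDerivAt_pow 2 x).const_mul T).add (hasDerivAt_const_mul y)).congr_deriv
      (by push_cast; ring)
  refine (hphase.ofReal_comp.mul_const Complex.I).cexp.congr_deriv ?_
  rw [← quadPhase]
  ring

lemma I_mul_integral_quadPhase_mul (hg : ∀ x ∈ uIcc a b, HasDerivAt g (g' x) x)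
    (hg' : IntervalIntegrable g' volume a b) :
    Complex.I * ∫ x in a..b, quadPhase T y x * ((2 * T * x + y : ℝ) * g x) =
      quadPhase T y b * g b - quadPhase T y a * g a - ∫ x in a..b, quadPhase T y x * g' x := by
  have parts := intervalIntegral.integral_mul_deriv_eq_deriv_mul hg
    (fun x _ => hasDerivAt_quadPhase T y x) hg'
    ((by fun_prop : Continuous fun x : ℝ =>
      Complex.I * (2 * T * x + y : ℝ) * quadPhase T y x).intervalIntegrable a b)
  rw [← intervalIntegral.integral_const_mul]
  simp only [mul_comm (quadPhase T y _) (g _), mul_comm (quadPhase T y _) (g' _)]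
  rw [← parts]
  congr 1 with x
  ring

lemma norm_integral_quadPhase_mul_antitone_le {φ φ' : ℝ → ℝ} (hab : a ≤ b)
    (hφ : ∀ x ∈ uIcc a b, HasDerivAt φ (φ' x) x) (hφ' : IntervalIntegrable φ' volume a b)
    (hφ'_nonpos : ∀ x ∈ Ioc a b, φ' x ≤ 0) (hφb : 0 ≤ φ b) :
    ‖∫ x in a..b, quadPhase T y x * ((2 * T * x + y : ℝ) * (φ x : ℂ))‖ ≤ 2 * φ a := by
  have hend : ∀ x, 0 ≤ φ x → ‖quadPhase T y x * (φ x : ℂ)‖ = φ x := fun x hx => by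
    rw [norm_mul, norm_quadPhase, one_mul, Complex.norm_of_nonneg hx]
  have hrest : ‖∫ x in a..b, quadPhase T y x * (φ' x : ℂ)‖ ≤ φ a - φ b := by
    calc ‖∫ x in a..b, quadPhase T y x * (φ' x : ℂ)‖
        ≤ ∫ x in a..b, -φ' x := by
          refine intervalIntegral.norm_integral_le_of_norm_le hab
            (Eventually.of_forall fun x hx => ?_) hφ'.neg
          rw [norm_mul, norm_quadPhase, one_mul, Complex.norm_real,
            norm_of_nonpos (hφ'_nonpos x hx)]
      _ = φ a - φ b := by
          rw [intervalIntegral.integral_neg,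
            intervalIntegral.integral_eq_sub_of_hasDerivAt hφ hφ', neg_sub]
  have hφa : 0 ≤ φ a := hφb.trans (sub_nonneg.1 ((norm_nonneg _).trans hrest))
  have parts := I_mul_integral_quadPhase_mul (T := T) (y := y)
    (fun x hx => (hφ x hx).ofReal_comp) (intervalIntegrable_ofReal hφ')
  calc ‖∫ x in a..b, quadPhase T y x * ((2 * T * x + y : ℝ) * (φ x : ℂ))‖
      = ‖quadPhase T y b * (φ b : ℂ) - quadPhase T y a * (φ a : ℂ) -
          ∫ x in a..b, quadPhase T y x * (φ' x : ℂ)‖ := by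
        rw [← parts, norm_mul, Complex.norm_I, one_mul]
    _ ≤ φ b + φ a + (φ a - φ b) := by
        refine (norm_sub_le _ _).trans (add_le_add ((norm_sub_le _ _).trans ?_) hrest)
        rw [hend b hφb, hend a hφa]
    _ = 2 * φ a := by ring

lemma norm_integral_quadPhase_one_le (hb : 1 ≤ b) : ‖∫ x in 1..b, quadPhase 1 0 x‖ ≤ 1 := by
  have hpos : ∀ x ∈ uIcc 1 b, 0 < x := fun x hx => by
    rw [uIcc_of_le hb] at hx
    linarith [hx.1]
  have hint : IntervalIntegrable (fun x : ℝ => -(x ^ 2)⁻¹ / 2) volume 1 b := by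
    refine ContinuousOn.intervalIntegrable (ContinuousOn.div_const (ContinuousOn.neg ?_) 2)
    exact ContinuousOn.inv₀ (by fun_prop) fun x hx => pow_ne_zero _ (hpos x hx).ne'
  have hcancel : ∫ x in 1..b, quadPhase 1 0 x =
      ∫ x in 1..b, quadPhase 1 0 x * ((2 * 1 * x + 0 : ℝ) * ((x⁻¹ / 2 : ℝ) : ℂ)) := by
    refine intervalIntegral.integral_congr fun x hx => ?_
    have hx0 := (hpos x hx).ne'
    rw [← Complex.ofReal_mul, show (2 * 1 * x + 0) * (x⁻¹ / 2) = 1 by field_simp; ring,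
      Complex.ofReal_one, mul_one]
  rw [hcancel]
  refine (norm_integral_quadPhase_mul_antitone_le hb
    (fun x hx => (hasDerivAt_inv (hpos x hx).ne').div_const 2) hint (fun x _ => ?_)
    (by positivity)).trans_eq (by norm_num)
  rw [neg_div]
  exact neg_nonpos.2 (by positivity)

lemma norm_integral_quadPhase_zero_le (b : ℝ) : ‖∫ x in 0..b, quadPhase 1 0 x‖ ≤ 2 := by
  have trivial_bound : ∀ c : ℝ, 0 ≤ c → c ≤ 1 → ‖∫ x in 0..c, quadPhase 1 0 x‖ ≤ 1 := by
    intro c hc0 hc1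
    refine (intervalIntegral.norm_integral_le_of_norm_le_const (C := 1)
      fun x _ => (norm_quadPhase 1 0 x).le).trans ?_
    rwa [sub_zero, abs_of_nonneg hc0, one_mul]
  have nonneg_bound : ∀ c : ℝ, 0 ≤ c → ‖∫ x in 0..c, quadPhase 1 0 x‖ ≤ 2 := by
    intro c hc
    rcases le_total c 1 with hc1 | hc1
    · linarith [trivial_bound c hc hc1]
    · have hint := (continuous_quadPhase 1 0).intervalIntegrable (μ := volume)
      rw [← intervalIntegral.integral_add_adjacent_intervals (hint 0 1) (hint 1 c)]
      linarith [norm_add_le (∫ x in 0..1, quadPhase 1 0 x) (∫ x in 1..c, quadPhase 1 0 x),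
        trivial_bound 1 zero_le_one le_rfl, norm_integral_quadPhase_one_le hc1]
  rcases le_total 0 b with hb | hb
  · exact nonneg_bound b hb
  · have heven := intervalIntegral.integral_comp_neg (a := b) (b := 0) (quadPhase 1 0)
    simp only [quadPhase, neg_sq, zero_mul, neg_zero] at heven
    rw [intervalIntegral.integral_symm, norm_neg]
    simp only [quadPhase, zero_mul, heven]
    simpa only [quadPhase, zero_mul] using nonneg_bound (-b) (by linarith)

lemma norm_fresnel_le (a b : ℝ) : ‖∫ x in a..b, quadPhase 1 0 x‖ ≤ 4 := by
  have hint := (continuous_quadPhase 1 0).intervalIntegrable (μ := volume) 0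
  rw [← intervalIntegral.integral_interval_sub_left (hint b) (hint a)]
  linarith [norm_sub_le (∫ x in 0..b, quadPhase 1 0 x) (∫ x in 0..a, quadPhase 1 0 x),
    norm_integral_quadPhase_zero_le a, norm_integral_quadPhase_zero_le b]

lemma quadPhase_complete_square (hT : 0 < T) (y x : ℝ) :
    quadPhase T y x = Complex.exp ((-(y ^ 2 / (4 * T)) : ℝ) * Complex.I) *
      quadPhase 1 0 (√T * x + y / (2 * √T)) := by
  have hsq : (√T * x + y / (2 * √T)) ^ 2 = T * x ^ 2 + y * x + y ^ 2 / (4 * T) := by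
    rw [add_sq, mul_pow, div_pow, mul_pow, sq_sqrt hT.le]
    field_simp
    ring
  rw [quadPhase, quadPhase, ← Complex.exp_add, ← add_mul, ← Complex.ofReal_add, hsq]
  ring_nf

lemma norm_integral_quadPhase_le_of_pos (hT : 0 < T) (y a b : ℝ) :
    ‖∫ x in a..b, quadPhase T y x‖ ≤ 4 * T ^ (-(1 / 2) : ℝ) := by
  simp only [quadPhase_complete_square hT]
  rw [intervalIntegral.integral_const_mul,
    intervalIntegral.integral_comp_mul_add _ (sqrt_pos.2 hT).ne', norm_mul, norm_smul,
    Complex.norm_exp_ofReal_mul_I, one_mul, rpow_neg hT.le, ← sqrt_eq_rpow, mul_comm,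
    norm_inv, norm_of_nonneg (sqrt_nonneg T)]
  gcongr
  exact norm_fresnel_le _ _

lemma norm_integral_quadPhase_le (hT : T ≠ 0) (y a b : ℝ) :
    ‖∫ x in a..b, quadPhase T y x‖ ≤ 4 * |T| ^ (-(1 / 2) : ℝ) := by
  rcases lt_or_gt_of_ne hT with hneg | hpos
  · have hconj : ∫ x in a..b, quadPhase (-T) (-y) x =
        starRingEnd ℂ (∫ x in a..b, quadPhase T y x) := by
      simp only [quadPhase_neg, intervalIntegral.intervalIntegral_eq_integral_uIoc, integral_conj,
        Complex.real_smul, map_mul, Complex.conj_ofReal]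
    rw [abs_of_neg hneg, ← RCLike.norm_conj, ← hconj]
    exact norm_integral_quadPhase_le_of_pos (neg_pos.2 hneg) (-y) a b
  · rw [abs_of_pos hpos]
    exact norm_integral_quadPhase_le_of_pos hpos y a b

lemma intervalIntegrable_of_hasDerivAt_of_norm_le {D : ℝ} (hab : a ≤ b)
    (hg : ∀ x ∈ Icc a b, HasDerivAt g (g' x) x) (hD : ∀ x ∈ Icc a b, ‖g' x‖ ≤ D) :
    IntervalIntegrable g' volume a b := by
  rw [intervalIntegrable_iff_integrableOn_Icc_of_le hab]
  refine IntegrableOn.congr_fun (f := deriv g) ?_ (fun x hx => (hg x hx).deriv) measurableSet_Icc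
  refine IntegrableOn.of_bound measure_Icc_lt_top
    (aestronglyMeasurable_deriv g _) D ?_
  filter_upwards [ae_restrict_mem measurableSet_Icc] with x hx
  rw [(hg x hx).deriv]
  exact hD x hx

/-- Van der Corput's argument: by parts against the primitive of the phase factor. -/
lemma norm_integral_quadPhase_mul_le {D : ℝ} (hT : T ≠ 0) (y : ℝ) (hab : a ≤ b)
    (hg : ∀ x ∈ Icc a b, HasDerivAt g (g' x) x) (hD : ∀ x ∈ Icc a b, ‖g' x‖ ≤ D) :
    ‖∫ x in a..b, quadPhase T y x * g x‖ ≤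
      4 * |T| ^ (-(1 / 2) : ℝ) * (‖g b‖ + D * (b - a)) := by
  have hphase := continuous_quadPhase T y
  set V : ℝ → ℂ := fun x => ∫ s in a..x, quadPhase T y s
  have hV : ∀ x, ‖V x‖ ≤ 4 * |T| ^ (-(1 / 2) : ℝ) := norm_integral_quadPhase_le hT y a
  have parts := intervalIntegral.integral_mul_deriv_eq_deriv_mul (u := g) (v := V)
    (fun x hx => hg x (by rwa [uIcc_of_le hab] at hx))
    (fun x _ => hphase.integral_hasStrictDerivAt a x |>.hasDerivAt)
    (intervalIntegrable_of_hasDerivAt_of_norm_le hab hg hD) (hphase.intervalIntegrable a b)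
  have hrest : ‖∫ x in a..b, g' x * V x‖ ≤ D * (4 * |T| ^ (-(1 / 2) : ℝ)) * (b - a) := by
    rw [← abs_of_nonneg (sub_nonneg.2 hab)]
    refine intervalIntegral.norm_integral_le_of_norm_le_const fun x hx => ?_
    rw [uIoc_of_le hab] at hx
    have hDx := hD x ⟨hx.1.le, hx.2⟩
    rw [norm_mul]
    exact mul_le_mul hDx (hV x) (norm_nonneg _) ((norm_nonneg _).trans hDx)
  have hVa : V a = 0 := intervalIntegral.integral_same
  simp only [mul_comm (quadPhase T y _)]
  rw [parts, hVa, mul_zero, sub_zero]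
  calc ‖g b * V b - ∫ x in a..b, g' x * V x‖
      ≤ ‖g b‖ * ‖V b‖ + ‖∫ x in a..b, g' x * V x‖ := by
        rw [← norm_mul]
        exact norm_sub_le _ _
    _ ≤ ‖g b‖ * (4 * |T| ^ (-(1 / 2) : ℝ)) + D * (4 * |T| ^ (-(1 / 2) : ℝ)) * (b - a) := by
        gcongr
        exact hV b
    _ = 4 * |T| ^ (-(1 / 2) : ℝ) * (‖g b‖ + D * (b - a)) := by ring

end QuadPhase

/-! ### Non-stationary phase -/

/-- The oscillatory integral with phase `T (x² + bx)` and amplitude `f x / (2x + b)^k`. The powers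
of the phase derivative `2x + b` are produced by repeated integration by parts. -/
def phaseIntegral (m M : ℝ) (k : ℕ) (T b : ℝ) (f : ℝ → ℂ) : ℂ :=
  ∫ x in m..M, quadPhase T (T * b) x * (f x * ((2 * x + b : ℝ) : ℂ)⁻¹ ^ k)

section PhaseIntegral

variable {m M T b : ℝ} {f : ℝ → ℂ}

lemma le_two_mul_add {x : ℝ} (hx : x ∈ Icc m M) (hb : |b| ≤ m) : m ≤ 2 * x + b := by
  linarith [hx.1, (abs_le.1 hb).1]

lemma exists_norm_phaseIntegral_le (hm : 0 < m) (hmM : m ≤ M) (hf : Continuous f) (k : ℕ) :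
    ∃ C : ℝ, ∀ T b : ℝ, |b| ≤ m → ‖phaseIntegral m M k T b f‖ ≤ C := by
  obtain ⟨C, hC⟩ := (isCompact_Icc (a := m) (b := M)).exists_bound_of_continuousOn hf.continuousOn
  refine ⟨C * m⁻¹ ^ k * |M - m|, fun T b hb =>
    intervalIntegral.norm_integral_le_of_norm_le_const fun x hx => ?_⟩
  rw [uIoc_of_le hmM] at hx
  have hx' : x ∈ Icc m M := ⟨hx.1.le, hx.2⟩
  have hlow := le_two_mul_add hx' hb
  have hfx := hC x hx'
  have hC0 : 0 ≤ C := (norm_nonneg _).trans hfx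
  have hinv : 0 ≤ (2 * x + b)⁻¹ := inv_nonneg.2 (hm.le.trans hlow)
  rw [norm_mul, norm_quadPhase, one_mul, norm_mul, norm_pow, norm_inv,
    Complex.norm_of_nonneg (hm.le.trans hlow)]
  gcongr

lemma hasDerivAt_mul_inv_pow {x : ℝ} {f' : ℂ} (hf : HasDerivAt f f' x) (hx : 2 * x + b ≠ 0)
    (k : ℕ) :
    HasDerivAt (fun x => f x * ((2 * x + b : ℝ) : ℂ)⁻¹ ^ (k + 1))
      (f' * ((2 * x + b : ℝ) : ℂ)⁻¹ ^ (k + 1) -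
        2 * (k + 1) * (f x * ((2 * x + b : ℝ) : ℂ)⁻¹ ^ (k + 2))) x := by
  have hlin : HasDerivAt (fun x : ℝ => ((2 * x + b : ℝ) : ℂ)) (2 : ℝ) x :=
    ((hasDerivAt_const_mul 2).add_const b).ofReal_comp
  refine (hf.mul ((hlin.fun_inv (Complex.ofReal_ne_zero.2 hx)).fun_pow (k + 1))).congr_deriv ?_
  rw [Nat.add_sub_cancel, div_eq_mul_inv, ← inv_pow]
  push_cast
  ring

lemma I_mul_phaseIntegral (hm : 0 < m) (hmM : m ≤ M) (hf : ContDiff ℝ 1 f)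
    (hfm : f m = 0) (hfM : f M = 0) (hb : |b| ≤ m) (k : ℕ) (T : ℝ) :
    Complex.I * (T * phaseIntegral m M k T b f) =
      2 * (k + 1) * phaseIntegral m M (k + 2) T b f - phaseIntegral m M (k + 1) T b (deriv f) := by
  have hne : ∀ x ∈ uIcc m M, 2 * x + b ≠ 0 := fun x hx => by
    rw [uIcc_of_le hmM] at hx
    exact (hm.trans_le (le_two_mul_add hx hb)).ne'
  have hcont : ∀ {g : ℝ → ℂ} (j : ℕ), Continuous g →
      ContinuousOn (fun x => g x * ((2 * x + b : ℝ) : ℂ)⁻¹ ^ j) (uIcc m M) := fun j hg =>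
    hg.continuousOn.mul
      ((ContinuousOn.inv₀ (by fun_prop) fun x hx => Complex.ofReal_ne_zero.2 (hne x hx)).pow j)
  have hint : ∀ {g : ℝ → ℂ} (j : ℕ), Continuous g → IntervalIntegrable
      (fun x => quadPhase T (T * b) x * (g x * ((2 * x + b : ℝ) : ℂ)⁻¹ ^ j)) volume m M :=
    fun j hg => ((continuous_quadPhase _ _).continuousOn.mul (hcont j hg)).intervalIntegrable
  have hf' : Continuous (deriv f) := hf.continuous_deriv le_rfl
  have parts := I_mul_integral_quadPhase_mul (T := T) (y := T * b)
    (fun x hx => hasDerivAt_mul_inv_pow (hf.differentiable one_ne_zero x).hasDerivAt (hne x hx) k)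
    ((hcont _ hf').sub (continuousOn_const.mul (hcont _ hf.continuous))).intervalIntegrable
  have hcancel : ∫ x in m..M, quadPhase T (T * b) x *
        ((2 * T * x + T * b : ℝ) * (f x * ((2 * x + b : ℝ) : ℂ)⁻¹ ^ (k + 1))) =
      T * phaseIntegral m M k T b f := by
    rw [phaseIntegral, ← intervalIntegral.integral_const_mul]
    refine intervalIntegral.integral_congr fun x hx => ?_
    have hx0 : ((2 * x + b : ℝ) : ℂ) ≠ 0 := Complex.ofReal_ne_zero.2 (hne x hx)
    rw [show 2 * T * x + T * b = T * (2 * x + b) by ring, Complex.ofReal_mul]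
    rw [pow_succ]
    field_simp
  rw [hcancel, hfm, hfM, zero_mul, zero_mul, mul_zero, mul_zero, sub_self, zero_sub] at parts
  simp only [mul_sub, mul_left_comm (quadPhase T (T * b) _) (2 * (k + 1) : ℂ)] at parts
  rw [parts, intervalIntegral.integral_sub (hint _ hf') ((hint _ hf.continuous).const_mul _),
    intervalIntegral.integral_const_mul, phaseIntegral, phaseIntegral, neg_sub]

lemma abs_mul_norm_phaseIntegral_le (hm : 0 < m) (hmM : m ≤ M) (hf : ContDiff ℝ 1 f)
    (hfm : f m = 0) (hfM : f M = 0) (hb : |b| ≤ m) (k : ℕ) (T : ℝ) :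
    |T| * ‖phaseIntegral m M k T b f‖ ≤
      2 * (k + 1) * ‖phaseIntegral m M (k + 2) T b f‖ +
        ‖phaseIntegral m M (k + 1) T b (deriv f)‖ := by
  have hk : ‖(2 * (k + 1) : ℂ)‖ = 2 * (k + 1) := by
    exact_mod_cast Complex.norm_natCast (2 * (k + 1))
  calc |T| * ‖phaseIntegral m M k T b f‖
      = ‖Complex.I * (T * phaseIntegral m M k T b f)‖ := by
        rw [norm_mul, norm_mul, Complex.norm_I, one_mul, Complex.norm_real, norm_eq_abs]
    _ ≤ _ := by
        rw [I_mul_phaseIntegral hm hmM hf hfm hfM hb, ← hk, ← norm_mul]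
        exact norm_sub_le _ _

/-- The derivative `T (2x + b)` of the phase has size at least `m |T|`, so each integration by parts
gains a factor `|T|⁻¹`. -/
lemma exists_norm_phaseIntegral_le_inv_pow (hm : 0 < m) (hmM : m ≤ M) (N : ℕ) :
    ∀ {f : ℝ → ℂ}, ContDiff ℝ (⊤ : ℕ∞) f → f =ᶠ[𝓝 m] 0 → f =ᶠ[𝓝 M] 0 → ∀ k : ℕ,
      ∃ C : ℝ, ∀ T b : ℝ, T ≠ 0 → |b| ≤ m →
        ‖phaseIntegral m M k T b f‖ ≤ C * (|T| ^ N)⁻¹ := by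
  induction N with
  | zero =>
    intro f hf _ _ k
    obtain ⟨C, hC⟩ := exists_norm_phaseIntegral_le hm hmM hf.continuous k
    exact ⟨C, fun T b _ hb => by simpa using hC T b hb⟩
  | succ N ih =>
    intro f hf hfm hfM k
    have hf' : ContDiff ℝ (⊤ : ℕ∞) (deriv f) := (contDiff_infty_iff_deriv.1 hf).2
    obtain ⟨C₁, h₁⟩ := ih hf hfm hfM (k + 2)
    obtain ⟨C₂, h₂⟩ := ih hf' (by simpa using hfm.deriv) (by simpa using hfM.deriv) (k + 1)
    refine ⟨2 * (k + 1) * C₁ + C₂, fun T b hT hb => ?_⟩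
    have step : |T| * ‖phaseIntegral m M k T b f‖ ≤
        (2 * (k + 1) * C₁ + C₂) * (|T| ^ N)⁻¹ := by
      calc |T| * ‖phaseIntegral m M k T b f‖
          ≤ _ := abs_mul_norm_phaseIntegral_le hm hmM (hf.of_le (by simp)) hfm.eq_of_nhds
            hfM.eq_of_nhds hb k T
        _ ≤ 2 * (k + 1) * (C₁ * (|T| ^ N)⁻¹) + C₂ * (|T| ^ N)⁻¹ := by
          gcongr
          exacts [h₁ T b hT hb, h₂ T b hT hb]
        _ = (2 * (k + 1) * C₁ + C₂) * (|T| ^ N)⁻¹ := by ring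
    rw [pow_succ, mul_inv, ← mul_assoc, ← div_eq_mul_inv, le_div_iff₀ (abs_pos.2 hT), mul_comm]
    exact step

end PhaseIntegral

/-! ### Bessel's equation in normal form -/

/-- `W` solves `W'' = (q / z² - 1) W` on `(0, ∞)` and `W'` is its derivative. For
`q = ν² - 1/4` this is the equation of `√z J_ν(z)`. -/
def IsNormalBesselSolution (q : ℝ) (W W' : ℝ → ℝ) : Prop :=
  ∀ z, 0 < z → HasDerivAt W (W' z) z ∧ HasDerivAt W' ((q / z ^ 2 - 1) * W z) z

/-- The amplitude `A` of the wave `e^{iεz}`, `ε = ±1`, in the decomposition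
`W(z) = e^{iz} A₊(z) + e^{-iz} A₋(z)` of a solution of Bessel's equation in normal form. -/
def waveAmplitude (W W' : ℝ → ℝ) (ε z : ℝ) : ℂ :=
  (W z - Complex.I * ε * W' z) / 2 * Complex.exp ((-(ε * z) : ℝ) * Complex.I)

lemma ofReal_eq_exp_mul_waveAmplitude_add (W W' : ℝ → ℝ) (z : ℝ) :
    (W z : ℂ) = Complex.exp ((1 * z : ℝ) * Complex.I) * waveAmplitude W W' 1 z +
      Complex.exp ((-1 * z : ℝ) * Complex.I) * waveAmplitude W W' (-1) z := by
  have hcancel : ∀ ε : ℝ, Complex.exp ((ε * z : ℝ) * Complex.I) *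
      Complex.exp ((-(ε * z) : ℝ) * Complex.I) = 1 := fun ε => by
    rw [← Complex.exp_add, Complex.ofReal_neg, neg_mul, add_neg_cancel, Complex.exp_zero]
  simp only [waveAmplitude, mul_left_comm (Complex.exp (_ * Complex.I)), hcancel]
  push_cast
  ring

namespace IsNormalBesselSolution

variable {q : ℝ} {W W' : ℝ → ℝ}

/-- With `E = W² + W'²` one has `|E'| = |2 q z⁻² W W'| ≤ |q| z⁻² E`. -/
lemma antitoneOn_energy (h : IsNormalBesselSolution q W W') :
    AntitoneOn (fun z => (W z ^ 2 + W' z ^ 2) * exp (|q| / z)) (Ioi 0) := by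
  have hder : ∀ z, 0 < z → HasDerivAt (fun z => (W z ^ 2 + W' z ^ 2) * exp (|q| / z))
      ((2 * q * W z * W' z - |q| * (W z ^ 2 + W' z ^ 2)) / z ^ 2 * exp (|q| / z)) z := by
    intro z hz
    have hexp := ((hasDerivAt_inv hz.ne').const_mul |q|).exp
    simp only [← div_eq_mul_inv] at hexp
    refine ((((h z hz).1.pow 2).add ((h z hz).2.pow 2)).mul hexp).congr_deriv ?_
    simp only [Pi.add_apply, Pi.pow_apply]
    field_simp
    push_cast
    ring
  refine antitoneOn_of_deriv_nonpos (convex_Ioi 0)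
    (fun z hz => (hder z hz).continuousAt.continuousWithinAt)
    (fun z hz => (hder z (interior_subset hz)).differentiableAt.differentiableWithinAt)
    fun z hz => ?_
  rw [(hder z (interior_subset hz)).deriv]
  have hcross : 2 * q * W z * W' z ≤ |q| * (W z ^ 2 + W' z ^ 2) := by
    calc 2 * q * W z * W' z ≤ |q * (2 * W z * W' z)| := (by ring : _ = _).trans_le (le_abs_self _)
      _ = |q| * |2 * W z * W' z| := abs_mul _ _
      _ ≤ |q| * (W z ^ 2 + W' z ^ 2) := by
        gcongr
        exact abs_le.2 ⟨by nlinarith [sq_nonneg (W z + W' z)], two_mul_le_add_sq _ _⟩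
  exact mul_nonpos_of_nonpos_of_nonneg
    (div_nonpos_of_nonpos_of_nonneg (sub_nonpos.2 hcross) (sq_nonneg z)) (exp_pos _).le

lemma exists_abs_le (h : IsNormalBesselSolution q W W') {z₀ : ℝ} (hz₀ : 0 < z₀) :
    ∃ B : ℝ, ∀ z, z₀ ≤ z → |W z| ≤ B ∧ |W' z| ≤ B := by
  refine ⟨√((W z₀ ^ 2 + W' z₀ ^ 2) * exp (|q| / z₀)), fun z hz => ?_⟩
  have hz0 : 0 < z := hz₀.trans_le hz
  have henergy : W z ^ 2 + W' z ^ 2 ≤ (W z₀ ^ 2 + W' z₀ ^ 2) * exp (|q| / z₀) :=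
    (le_mul_of_one_le_right (by positivity) (one_le_exp (by positivity))).trans
      (h.antitoneOn_energy hz₀ hz0 hz)
  exact ⟨abs_le_sqrt (by linarith [sq_nonneg (W' z)]),
    abs_le_sqrt (by linarith [sq_nonneg (W z)])⟩

lemma hasDerivAt_waveAmplitude (h : IsNormalBesselSolution q W W') {ε z : ℝ} (hε : ε ^ 2 = 1)
    (hz : 0 < z) :
    HasDerivAt (waveAmplitude W W' ε)
      (-(Complex.I * ε) / 2 * (q / z ^ 2 * W z : ℝ) *
        Complex.exp ((-(ε * z) : ℝ) * Complex.I)) z := by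
  have hexp := ((hasDerivAt_const_mul ε (x := z)).neg.ofReal_comp.mul_const Complex.I).cexp
  have hε' : (ε : ℂ) ^ 2 = 1 := by exact_mod_cast hε
  refine (((((h z hz).1.ofReal_comp).sub
    ((h z hz).2.ofReal_comp.const_mul (Complex.I * ε))).div_const 2).mul hexp).congr_deriv ?_
  simp only [Pi.sub_apply, Pi.neg_apply]
  push_cast
  linear_combination Complex.exp (-(ε * z) * Complex.I) * (W' z / 2 * ((ε : ℂ) ^ 2 *
    Complex.I_sq - hε'))

lemma exists_norm_waveAmplitude_le (h : IsNormalBesselSolution q W W') {z₀ : ℝ} (hz₀ : 0 < z₀) :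
    ∃ B : ℝ, ∀ ε z : ℝ, ε ^ 2 = 1 → z₀ ≤ z →
      ‖waveAmplitude W W' ε z‖ ≤ B ∧ ‖deriv (waveAmplitude W W' ε) z‖ ≤ B / z := by
  obtain ⟨B, hB⟩ := h.exists_abs_le hz₀
  have hB0 : 0 ≤ B := (abs_nonneg _).trans (hB z₀ le_rfl).1
  refine ⟨B + |q| / 2 * (B / z₀), fun ε z hε hz => ?_⟩
  have hz0 : 0 < z := hz₀.trans_le hz
  have hεn : ‖(ε : ℂ)‖ = 1 := by
    rw [Complex.norm_real, norm_eq_abs, ← sqrt_sq_eq_abs, hε, sqrt_one]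
  obtain ⟨hW, hW'⟩ := hB z hz
  constructor
  · calc ‖waveAmplitude W W' ε z‖
        = ‖(W z - Complex.I * ε * W' z : ℂ)‖ / 2 := by
          rw [waveAmplitude, norm_mul, Complex.norm_exp_ofReal_mul_I, mul_one, norm_div,
            Complex.norm_ofNat]
      _ ≤ (|W z| + |W' z|) / 2 := by
          gcongr
          refine (norm_sub_le _ _).trans_eq ?_
          simp only [norm_mul, Complex.norm_I, hεn, one_mul, Complex.norm_real, norm_eq_abs]
      _ ≤ B + |q| / 2 * (B / z₀) := by
          have : 0 ≤ |q| / 2 * (B / z₀) := by positivity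
          linarith
  · rw [(h.hasDerivAt_waveAmplitude hε hz0).deriv]
    calc ‖-(Complex.I * ε) / 2 * (q / z ^ 2 * W z : ℝ) *
          Complex.exp ((-(ε * z) : ℝ) * Complex.I)‖
        = |q| / 2 * (|W z| / z) / z := by
          rw [norm_mul, Complex.norm_exp_ofReal_mul_I, mul_one, norm_mul, norm_div, norm_neg,
            norm_mul, Complex.norm_I, hεn, Complex.norm_ofNat, Complex.norm_real, norm_eq_abs,
            abs_mul, abs_div, abs_of_pos (pow_pos hz0 2)]
          field_simp
      _ ≤ |q| / 2 * (B / z₀) / z := by gcongr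
      _ ≤ (B + |q| / 2 * (B / z₀)) / z := by
          gcongr
          linarith

/-- The bound on the derivative is uniform in `ρ` because `|A'(z)| ≤ B / z`. -/
lemma exists_norm_mul_waveAmplitude_le (h : IsNormalBesselSolution q W W') {m M : ℝ} (hm : 0 < m)
    {χ : ℝ → ℂ} (hχ : ContDiffOn ℝ 1 χ (Ioi 0)) :
    ∃ C : ℝ, ∀ ε ρ x : ℝ, ε ^ 2 = 1 → m ≤ ρ → x ∈ Icc m M →
      DifferentiableAt ℝ (fun x => χ x * waveAmplitude W W' ε (ρ * x)) x ∧
        ‖χ x * waveAmplitude W W' ε (ρ * x)‖ ≤ C ∧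
        ‖deriv (fun x => χ x * waveAmplitude W W' ε (ρ * x)) x‖ ≤ C := by
  obtain ⟨B, hB⟩ := h.exists_norm_waveAmplitude_le (mul_pos hm hm)
  have hsub : Icc m M ⊆ Ioi 0 := fun x hx => hm.trans_le hx.1
  obtain ⟨K, hK⟩ := isCompact_Icc.exists_bound_of_continuousOn (hχ.continuousOn.mono hsub)
  obtain ⟨K', hK'⟩ := isCompact_Icc.exists_bound_of_continuousOn
    ((hχ.continuousOn_deriv_of_isOpen isOpen_Ioi le_rfl).mono hsub)
  refine ⟨max (K * B) (K' * B + K * (B / m)), fun ε ρ x hε hρ hx => ?_⟩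
  have hx0 : 0 < x := hsub hx
  have hρ0 : 0 < ρ := hm.trans_le hρ
  obtain ⟨hA, hA'⟩ := hB ε (ρ * x) hε (mul_le_mul hρ hx.1 hm.le hρ0.le)
  have hB0 : 0 ≤ B := (norm_nonneg _).trans hA
  have hK0 : 0 ≤ K := (norm_nonneg _).trans (hK x hx)
  have hK'0 : 0 ≤ K' := (norm_nonneg _).trans (hK' x hx)
  have hχx := ((hχ.differentiableOn one_ne_zero).differentiableAt (Ioi_mem_nhds hx0)).hasDerivAt
  have hAx := (h.hasDerivAt_waveAmplitude hε (mul_pos hρ0 hx0)).differentiableAt.hasDerivAt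
  have hder : HasDerivAt (fun x => χ x * waveAmplitude W W' ε (ρ * x))
      (deriv χ x * waveAmplitude W W' ε (ρ * x) +
        χ x * ρ • deriv (waveAmplitude W W' ε) (ρ * x)) x :=
    hχx.mul (hAx.scomp x (hasDerivAt_const_mul ρ))
  have hscaled : ‖ρ • deriv (waveAmplitude W W' ε) (ρ * x)‖ ≤ B / m := by
    rw [norm_smul, norm_of_nonneg hρ0.le]
    calc ρ * ‖deriv (waveAmplitude W W' ε) (ρ * x)‖ ≤ ρ * (B / (ρ * x)) := by gcongr
      _ = B / x := by field_simp
      _ ≤ B / m := by gcongr; exact hx.1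
  refine ⟨hder.differentiableAt, le_max_of_le_left ?_, le_max_of_le_right ?_⟩
  · rw [norm_mul]
    exact mul_le_mul (hK x hx) hA (norm_nonneg _) hK0
  · rw [hder.deriv]
    refine (norm_add_le _ _).trans ?_
    rw [norm_mul, norm_mul]
    exact add_le_add (mul_le_mul (hK' x hx) hA (norm_nonneg _) hK'0)
      (mul_le_mul (hK x hx) hscaled (norm_nonneg _) hK0)

lemma exists_norm_integral_waveAmplitude_le (h : IsNormalBesselSolution q W W') {m M : ℝ}
    (hm : 0 < m) (hmM : m ≤ M) {χ : ℝ → ℂ} (hχ : ContDiffOn ℝ 1 χ (Ioi 0)) :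
    ∃ C : ℝ, ∀ ε T ρ : ℝ, ε ^ 2 = 1 → T ≠ 0 → m ≤ ρ →
      ‖∫ x in m..M, quadPhase T (ε * ρ) x * (χ x * waveAmplitude W W' ε (ρ * x))‖ ≤
        C * |T| ^ (-(1 / 2) : ℝ) := by
  obtain ⟨C, hC⟩ := h.exists_norm_mul_waveAmplitude_le (M := M) hm hχ
  refine ⟨4 * (C + C * (M - m)), fun ε T ρ hε hT hρ => ?_⟩
  calc ‖∫ x in m..M, quadPhase T (ε * ρ) x * (χ x * waveAmplitude W W' ε (ρ * x))‖
      ≤ 4 * |T| ^ (-(1 / 2) : ℝ) *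
          (‖χ M * waveAmplitude W W' ε (ρ * M)‖ + C * (M - m)) :=
        norm_integral_quadPhase_mul_le hT _ hmM (fun x hx => (hC ε ρ x hε hρ hx).1.hasDerivAt)
          fun x hx => (hC ε ρ x hε hρ hx).2.2
    _ ≤ 4 * |T| ^ (-(1 / 2) : ℝ) * (C + C * (M - m)) := by
        gcongr
        exact (hC ε ρ M hε hρ (right_mem_Icc.2 hmM)).2.1
    _ = 4 * (C + C * (M - m)) * |T| ^ (-(1 / 2) : ℝ) := by ring

lemma exists_norm_integral_le (h : IsNormalBesselSolution q W W') {m M : ℝ}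
    (hm : 0 < m) (hmM : m ≤ M) {χ : ℝ → ℂ} (hχ : ContDiffOn ℝ 1 χ (Ioi 0)) :
    ∃ C : ℝ, ∀ T ρ : ℝ, T ≠ 0 → m ≤ ρ →
      ‖∫ x in m..M, quadPhase T 0 x * (χ x * W (ρ * x))‖ ≤ C * |T| ^ (-(1 / 2) : ℝ) := by
  obtain ⟨C, hC⟩ := h.exists_norm_integral_waveAmplitude_le hm hmM hχ
  refine ⟨2 * C, fun T ρ hT hρ => ?_⟩
  have hpos : ∀ x ∈ uIcc m M, 0 < x := fun x hx => by
    rw [uIcc_of_le hmM] at hx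
    exact hm.trans_le hx.1
  have hint : ∀ ε : ℝ, ε ^ 2 = 1 → IntervalIntegrable
      (fun x => quadPhase T (ε * ρ) x * (χ x * waveAmplitude W W' ε (ρ * x))) volume m M := by
    intro ε hε
    refine ContinuousOn.intervalIntegrable fun x hx => ContinuousAt.continuousWithinAt ?_
    have hA := (h.hasDerivAt_waveAmplitude hε
      (mul_pos (hm.trans_le hρ) (hpos x hx))).continuousAt
    exact (continuous_quadPhase T (ε * ρ)).continuousAt.mul
      ((hχ.continuousOn.continuousAt (Ioi_mem_nhds (hpos x hx))).mul
        (hA.comp (continuous_const_mul ρ).continuousAt))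
  have hsplit : ∫ x in m..M, quadPhase T 0 x * (χ x * W (ρ * x)) =
      (∫ x in m..M, quadPhase T (1 * ρ) x * (χ x * waveAmplitude W W' 1 (ρ * x))) +
        ∫ x in m..M, quadPhase T (-1 * ρ) x * (χ x * waveAmplitude W W' (-1) (ρ * x)) := by
    rw [← intervalIntegral.integral_add (hint 1 (by norm_num)) (hint (-1) (by norm_num))]
    congr 1 with x
    rw [ofReal_eq_exp_mul_waveAmplitude_add W W', quadPhase_eq_mul_exp T (1 * ρ),
      quadPhase_eq_mul_exp T (-1 * ρ), mul_assoc 1, mul_assoc (-1)]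
    ring
  rw [hsplit, two_mul, add_mul]
  exact (norm_add_le _ _).trans
    (add_le_add (hC 1 T ρ (by norm_num) hT hρ) (hC (-1) T ρ (by norm_num) hT hρ))

end IsNormalBesselSolution

/-- Up to a constant the solution is `√z J_ν(z)` with `ν = α + 1/2`, and `q = ν² - 1/4`. -/
lemma isNormalBesselSolution_poissonIntegral {α : ℝ} (hα : -1 < α) :
    IsNormalBesselSolution (α * (α + 1)) (fun z => z ^ (α + 1) * poissonIntegral α z)
      (fun z => (α + 1) * z ^ α * poissonIntegral α z -
        z ^ (α + 1) * (z * poissonIntegral (α + 1) z) / (2 * (α + 1))) := by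
  have hα1 : α + 1 ≠ 0 := by linarith
  intro z hz
  have hj := hasDerivAt_poissonIntegral hα z
  have hj₁ := hasDerivAt_mul_poissonIntegral_add_one hα z
  have hp : HasDerivAt (fun z : ℝ => z ^ (α + 1)) ((α + 1) * z ^ α) z :=
    (hasDerivAt_rpow_const (Or.inl hz.ne')).congr_deriv (by rw [add_sub_cancel_right])
  have hp₀ : HasDerivAt (fun z : ℝ => z ^ α) (α * z ^ α / z) z :=
    (hasDerivAt_rpow_const (Or.inl hz.ne')).congr_deriv (by rw [rpow_sub_one hz.ne', mul_div_assoc])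
  constructor
  · refine (hp.mul hj).congr_deriv ?_
    ring
  · refine (((hp₀.const_mul (α + 1)).mul hj).sub ((hp.mul hj₁).div_const _)).congr_deriv ?_
    simp only [rpow_add_one hz.ne']
    field_simp
    ring

/-! ### The rescaled kernel -/

/-- The oscillatory integral to which `freeKernel` reduces after the substitution `x = hλ`, with
`T = t / h²`, `ρ = σ / h` and the Bessel function written as Poisson's integral. -/
def rescaledKernel (α m M : ℝ) (f : ℝ → ℂ) (T ρ : ℝ) : ℂ :=
  ∫ x in m..M, quadPhase T 0 x * (f x * poissonIntegral α (ρ * x))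

section RescaledKernel

variable {α m M : ℝ} {f : ℝ → ℂ}

lemma exists_norm_rescaledKernel_le (hα : -1 < α) (hmM : m ≤ M) (hf : Continuous f) :
    ∃ C : ℝ, ∀ T ρ : ℝ, ‖rescaledKernel α m M f T ρ‖ ≤ C := by
  obtain ⟨K, hK⟩ := (isCompact_Icc (a := m) (b := M)).exists_bound_of_continuousOn hf.continuousOn
  refine ⟨K * weightMoment α 0 * |M - m|, fun T ρ =>
    intervalIntegral.norm_integral_le_of_norm_le_const fun x hx => ?_⟩
  rw [uIoc_of_le hmM] at hx
  have hKx := hK x ⟨hx.1.le, hx.2⟩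
  rw [norm_mul, norm_quadPhase, one_mul, norm_mul, Complex.norm_real]
  exact mul_le_mul hKx (abs_poissonIntegral_le hα _) (norm_nonneg _) ((norm_nonneg _).trans hKx)

lemma rescaledKernel_eq_integral_weight_mul (hα : -1 < α) (hf : Continuous f) (T ρ : ℝ) :
    rescaledKernel α m M f T ρ =
      ∫ u in (-1 : ℝ)..1, (((1 - u ^ 2) ^ α : ℝ) : ℂ) *
        ∫ x in m..M, quadPhase T (ρ * u) x * f x := by
  have hweight : IntegrableOn (fun u : ℝ => (((1 - u ^ 2) ^ α : ℝ) : ℂ)) (uIoc (-1) 1) :=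
    intervalIntegrable_iff.1 (intervalIntegrable_ofReal (intervalIntegrable_weight hα))
  have hcont : IntegrableOn f (uIoc m M) := intervalIntegrable_iff.1 (hf.intervalIntegrable m M)
  have hint : Integrable (fun p : ℝ × ℝ => quadPhase T (ρ * p.2) p.1 *
        (f p.1 * (((1 - p.2 ^ 2) ^ α : ℝ) : ℂ)))
      ((volume.restrict (uIoc m M)).prod (volume.restrict (uIoc (-1) 1))) := by
    refine (Integrable.mul_prod hcont hweight).bdd_mul (c := 1)
      (Continuous.aestronglyMeasurable ?_)
      (Eventually.of_forall fun p => (norm_quadPhase _ _ _).le)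
    unfold quadPhase
    fun_prop
  calc rescaledKernel α m M f T ρ
      = ∫ x in m..M, ∫ u in (-1 : ℝ)..1,
          quadPhase T (ρ * u) x * (f x * (((1 - u ^ 2) ^ α : ℝ) : ℂ)) := by
        rw [rescaledKernel]
        congr 1 with x
        rw [ofReal_poissonIntegral hα, ← mul_assoc, ← intervalIntegral.integral_const_mul]
        congr 1 with u
        rw [quadPhase_eq_mul_exp T (ρ * u), mul_right_comm ρ x u]
        ring
    _ = ∫ u in (-1 : ℝ)..1, ∫ x in m..M,
          quadPhase T (ρ * u) x * (f x * (((1 - u ^ 2) ^ α : ℝ) : ℂ)) :=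
        intervalIntegral_intervalIntegral_swap
          (by rwa [IntegrableOn, Measure.volume_eq_prod, ← Measure.prod_restrict])
    _ = _ := by
        congr 1 with u
        rw [← intervalIntegral.integral_const_mul]
        congr 1 with x
        ring

lemma exists_norm_rescaledKernel_le_inv_pow (hα : -1 < α) (hm : 0 < m) (hmM : m ≤ M)
    (hf : ContDiff ℝ (⊤ : ℕ∞) f) (hfm : f =ᶠ[𝓝 m] 0) (hfM : f =ᶠ[𝓝 M] 0) (N : ℕ) :
    ∃ C : ℝ, ∀ T ρ : ℝ, T ≠ 0 → |ρ| ≤ m * |T| →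
      ‖rescaledKernel α m M f T ρ‖ ≤ C * (|T| ^ N)⁻¹ := by
  obtain ⟨C, hC⟩ := exists_norm_phaseIntegral_le_inv_pow hm hmM N hf hfm hfM 0
  refine ⟨weightMoment α 0 * C, fun T ρ hT hρ => ?_⟩
  rw [rescaledKernel_eq_integral_weight_mul hα hf.continuous, mul_assoc]
  refine norm_integral_weight_mul_le hα fun u hu => ?_
  have hb : |ρ * u / T| ≤ m := by
    rw [abs_div, abs_mul, div_le_iff₀ (abs_pos.2 hT)]
    exact (mul_le_of_le_one_right (abs_nonneg ρ) (abs_le.2 hu)).trans hρ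
  simpa only [phaseIntegral, mul_div_cancel₀ _ hT, pow_zero, mul_one] using hC T (ρ * u / T) hT hb

lemma exists_norm_rescaledKernel_le_rpow (hα : -1 < α) (hm : 0 < m) (hmM : m ≤ M)
    (hf : ContDiff ℝ (⊤ : ℕ∞) f) :
    ∃ C : ℝ, ∀ T ρ : ℝ, T ≠ 0 → m ≤ ρ →
      ‖rescaledKernel α m M f T ρ‖ ≤ C * |T| ^ (-(1 / 2) : ℝ) * ρ ^ (-(α + 1)) := by
  have hχ : ContDiffOn ℝ 1 (fun x => f x * ((x ^ (-(α + 1)) : ℝ) : ℂ)) (Ioi 0) :=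
    (hf.of_le (by simp)).contDiffOn.mul (Complex.ofRealCLM.contDiff.comp_contDiffOn fun x hx =>
      (contDiffAt_rpow_const_of_ne (ne_of_gt hx)).contDiffWithinAt)
  obtain ⟨C, hC⟩ := (isNormalBesselSolution_poissonIntegral hα).exists_norm_integral_le hm hmM hχ
  refine ⟨C, fun T ρ hT hρ => ?_⟩
  have hρ0 : 0 < ρ := hm.trans_le hρ
  have hkernel : rescaledKernel α m M f T ρ = (ρ ^ (-(α + 1)) : ℝ) * ∫ x in m..M,
      quadPhase T 0 x * (f x * ((x ^ (-(α + 1)) : ℝ) : ℂ) *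
        (((ρ * x) ^ (α + 1) * poissonIntegral α (ρ * x) : ℝ) : ℂ)) := by
    rw [rescaledKernel, ← intervalIntegral.integral_const_mul]
    refine intervalIntegral.integral_congr fun x hx => ?_
    rw [uIcc_of_le hmM] at hx
    have hx0 : 0 < x := hm.trans_le hx.1
    have hcancel : ρ ^ (-(α + 1)) * x ^ (-(α + 1)) * (ρ * x) ^ (α + 1) = 1 := by
      rw [← mul_rpow hρ0.le hx0.le, ← rpow_add (mul_pos hρ0 hx0), neg_add_cancel, rpow_zero]
    have hcancel' := congrArg Complex.ofReal hcancel
    push_cast at hcancel' ⊢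
    linear_combination -(quadPhase T 0 x * f x * poissonIntegral α (ρ * x)) * hcancel'
  rw [hkernel, norm_mul, Complex.norm_of_nonneg (rpow_nonneg hρ0.le _), mul_comm]
  exact mul_le_mul_of_nonneg_right (hC T ρ hT hρ) (rpow_nonneg hρ0.le _)

end RescaledKernel

lemma le_mul_rpow_of_le_one {X C τ r p q : ℝ} (hX : X ≤ C) (hC : 0 ≤ C) (hτ : 0 < τ) (hr : 0 < r)
    (hτ1 : τ ≤ 1) (hr1 : r ≤ 1) (hp : p ≤ 0) (hq : q ≤ 0) : X ≤ C * τ ^ p * r ^ q := by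
  have h₁ := one_le_rpow_of_pos_of_le_one_of_nonpos hτ hτ1 hp
  have h₂ := one_le_rpow_of_pos_of_le_one_of_nonpos hr hr1 hq
  calc X ≤ C * 1 * 1 := by linarith
    _ ≤ C * τ ^ p * r ^ q := by gcongr

/-- Interpolation of the three bounds: they are used for `τ, r ≤ 1`, for `r ≤ τ` and for `τ ≤ r`
respectively. -/
lemma le_mul_rpow_of_three_bounds {X C τ r s β : ℝ} {N : ℕ} (hτ : 0 < τ) (hr : 0 < r) (hC : 0 ≤ C)
    (hs0 : 0 ≤ s) (hsβ : s ≤ β) (hN : β + 1 / 2 ≤ N) (h_one : X ≤ C)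
    (h_inv : r ≤ τ → X ≤ C * (τ ^ N)⁻¹)
    (h_vdc : 1 ≤ r → X ≤ C * τ ^ (-(1 / 2) : ℝ) * r ^ (-β)) :
    X ≤ C * τ ^ (-s - 1 / 2) * r ^ (s - β) := by
  rcases le_total r τ with hrτ | hτr
  · rcases le_total τ 1 with hτ1 | hτ1
    · exact le_mul_rpow_of_le_one h_one hC hτ hr hτ1 (hrτ.trans hτ1) (by linarith) (by linarith)
    · calc X ≤ C * (τ ^ N)⁻¹ := h_inv hrτ
        _ = C * τ ^ (-(N : ℝ)) := by rw [rpow_neg hτ.le, rpow_natCast]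
        _ ≤ C * τ ^ (-s - 1 / 2 + (s - β)) := by
          gcongr
          linarith
        _ = C * τ ^ (-s - 1 / 2) * τ ^ (s - β) := by rw [rpow_add hτ, mul_assoc]
        _ ≤ C * τ ^ (-s - 1 / 2) * r ^ (s - β) := by
          exact mul_le_mul_of_nonneg_left (rpow_le_rpow_of_nonpos hr hrτ (by linarith))
            (by positivity)
  · rcases le_total r 1 with hr1 | hr1
    · exact le_mul_rpow_of_le_one h_one hC hτ hr (hτr.trans hr1) hr1 (by linarith) (by linarith)
    · calc X ≤ C * τ ^ (-(1 / 2) : ℝ) * r ^ (-β) := h_vdc hr1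
        _ = C * τ ^ (-s - 1 / 2) * (τ ^ s * r ^ (-β)) := by
          rw [show (-(1 / 2) : ℝ) = -s - 1 / 2 + s by ring, rpow_add hτ]
          ring
        _ ≤ C * τ ^ (-s - 1 / 2) * (r ^ s * r ^ (-β)) := by gcongr
        _ = C * τ ^ (-s - 1 / 2) * r ^ (s - β) := by rw [← rpow_add hr, sub_eq_add_neg s β]

lemma exists_norm_rescaledKernel_le_rpow_mul_rpow {α m M s : ℝ} {f : ℝ → ℂ} (hα : -1 < α)
    (hm : 0 < m) (hmM : m ≤ M) (hf : ContDiff ℝ (⊤ : ℕ∞) f) (hfm : f =ᶠ[𝓝 m] 0)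
    (hfM : f =ᶠ[𝓝 M] 0) (hs0 : 0 ≤ s) (hs : s ≤ α + 1) :
    ∃ C : ℝ, 0 ≤ C ∧ ∀ T ρ : ℝ, T ≠ 0 → 0 < ρ →
      ‖rescaledKernel α m M f T ρ‖ ≤ C * |T| ^ (-s - 1 / 2) * ρ ^ (s - (α + 1)) := by
  obtain ⟨N, hN⟩ := exists_nat_ge (α + 1 + 1 / 2)
  obtain ⟨C₁, h₁⟩ := exists_norm_rescaledKernel_le hα hmM hf.continuous
  obtain ⟨C₂, h₂⟩ := exists_norm_rescaledKernel_le_inv_pow hα hm hmM hf hfm hfM N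
  obtain ⟨C₃, h₃⟩ := exists_norm_rescaledKernel_le_rpow hα hm hmM hf
  set C := max C₁ (max C₂ (C₃ * m ^ (-(α + 1))))
  have hC₁ : C₁ ≤ C := le_max_left _ _
  have hC₂ : C₂ ≤ C := (le_max_left _ _).trans (le_max_right _ _)
  have hC₃ : C₃ * m ^ (-(α + 1)) ≤ C := (le_max_right _ _).trans (le_max_right _ _)
  have hC0 : 0 ≤ C := (norm_nonneg _).trans ((h₁ 0 0).trans hC₁)
  refine ⟨C * m ^ (-(s - (α + 1))), by positivity, fun T ρ hT hρ => ?_⟩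
  have hmain : ‖rescaledKernel α m M f T ρ‖ ≤
      C * |T| ^ (-s - 1 / 2) * (ρ / m) ^ (s - (α + 1)) := by
    refine le_mul_rpow_of_three_bounds (abs_pos.2 hT) (div_pos hρ hm) hC0 hs0 hs hN
      ((h₁ T ρ).trans hC₁) (fun hle => ?_) fun hle => ?_
    · rw [div_le_iff₀' hm] at hle
      refine (h₂ T ρ hT (by rwa [abs_of_pos hρ])).trans ?_
      gcongr
    · rw [one_le_div hm] at hle
      calc ‖rescaledKernel α m M f T ρ‖
          ≤ C₃ * |T| ^ (-(1 / 2) : ℝ) * ρ ^ (-(α + 1)) := h₃ T ρ hT hle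
        _ = C₃ * m ^ (-(α + 1)) * |T| ^ (-(1 / 2) : ℝ) * (ρ / m) ^ (-(α + 1)) := by
          rw [div_rpow hρ.le hm.le]
          field_simp
        _ ≤ C * |T| ^ (-(1 / 2) : ℝ) * (ρ / m) ^ (-(α + 1)) := by gcongr
  refine hmain.trans_eq ?_
  rw [div_rpow hρ.le hm.le, rpow_neg hm.le]
  ring

/-! ### The free kernel -/

section FreeKernel

variable {n : ℕ} {ψ : ℝ → ℝ}

/-- The amplitude `ψ(x²) x^{n-1}` of `freeKernel n ψ` after the substitution `x = hλ`: the factor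
`λ` and the power `λ^{2ν} = λ^{n-2}` split off from `𝒥_ν` are absorbed into it. -/
def cutoffAmplitude (n : ℕ) (ψ : ℝ → ℝ) (x : ℝ) : ℂ := ((ψ (x ^ 2) * x ^ (n - 1) : ℝ) : ℂ)

lemma contDiff_cutoffAmplitude (n : ℕ) (hψ : ContDiff ℝ (⊤ : ℕ∞) ψ) :
    ContDiff ℝ (⊤ : ℕ∞) (cutoffAmplitude n ψ) :=
  Complex.ofRealCLM.contDiff.comp
    ((hψ.comp (contDiff_id.pow 2)).mul (contDiff_id.pow (n - 1)))

lemma cutoffAmplitude_eventuallyEq_zero (n : ℕ) {x : ℝ} (hx : x ^ 2 ∉ tsupport ψ) :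
    cutoffAmplitude n ψ =ᶠ[𝓝 x] 0 := by
  have hev : ∀ᶠ y in 𝓝 (x ^ 2), y ∉ tsupport ψ :=
    (isClosed_tsupport ψ).isOpen_compl.mem_nhds hx
  filter_upwards [(continuous_pow 2).continuousAt.eventually hev] with y hy
  simp [cutoffAmplitude, image_eq_zero_of_notMem_tsupport hy]

lemma IsCutoff.exists_tsupport_subset_Ioo_sq (hψ : IsCutoff ψ) :
    ∃ m M : ℝ, 0 < m ∧ m ≤ M ∧ tsupport ψ ⊆ Ioo (m ^ 2) (M ^ 2) := by
  obtain ⟨-, hcompact, hpos⟩ := hψ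
  have hK : IsCompact (insert 1 (tsupport ψ)) := hcompact.isCompact.insert 1
  obtain ⟨a, ha, hmin⟩ := hK.exists_isLeast (insert_nonempty _ _)
  obtain ⟨b, -, hmax⟩ := hK.exists_isGreatest (insert_nonempty _ _)
  have ha0 : 0 < a := insert_subset (mem_Ioi.2 one_pos) hpos ha
  have hab : a ≤ b := hmax ha
  refine ⟨√(a / 2), √(b + 1), sqrt_pos.2 (half_pos ha0), sqrt_le_sqrt (by linarith), ?_⟩
  rw [sq_sqrt (by linarith), sq_sqrt (by linarith)]
  intro x hx
  have hax : a ≤ x := hmin (mem_insert_of_mem _ hx)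
  have hxb : x ≤ b := hmax (mem_insert_of_mem _ hx)
  exact ⟨by linarith, by linarith⟩

lemma exists_mul_calJ_eq_mul_cutoffAmplitude (hn : 2 ≤ n) (ψ : ℝ → ℝ) :
    ∃ c : ℝ, ∀ h σ x : ℝ, 0 < h → 0 < σ → 0 < x →
      ((ψ (h ^ 2 * x ^ 2) * calJ (((n : ℝ) - 2) / 2) (σ * x) * x : ℝ) : ℂ) =
        ((c * σ ^ (2 * (((n : ℝ) - 2) / 2)) * (h ^ (n - 1))⁻¹ : ℝ) : ℂ) *
          (cutoffAmplitude n ψ (h * x) *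
            (poissonIntegral (((n : ℝ) - 3) / 2) (σ / h * (h * x)) : ℂ)) := by
  have hn' : (2 : ℝ) ≤ n := by exact_mod_cast hn
  set ν : ℝ := ((n : ℝ) - 2) / 2 with hν
  set α : ℝ := ((n : ℝ) - 3) / 2 with hα
  have hνα : ν = α + 1 / 2 := by rw [hν, hα]; ring
  refine ⟨(1 / 2) ^ ν * (Gamma (α + 3 / 2) * weightMoment α 0)⁻¹, fun h σ x hh hσ hx => ?_⟩
  have hpow : x ^ (2 * ν) * x = x ^ (n - 1) := by
    rw [← rpow_add_one hx.ne', ← rpow_natCast, Nat.cast_pred (by omega)]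
    congr 1
    rw [hν]
    ring
  have hcalJ := calJ_eq_poissonIntegral (by linarith : -1 < α) (mul_pos hσ hx)
  rw [show 2 * α + 1 = 2 * ν by rw [hνα]; ring, ← hνα, mul_rpow hσ.le hx.le] at hcalJ
  rw [cutoffAmplitude, hcalJ, mul_pow h x (n - 1), ← hpow, mul_pow h x 2,
    show σ / h * (h * x) = σ * x by field_simp]
  norm_cast
  field_simp

lemma rescaledKernel_cutoffAmplitude {m M : ℝ} (hm : 0 < m) (hmM : m ≤ M)
    (hψ : tsupport ψ ⊆ Ioo (m ^ 2) (M ^ 2)) (α T ρ : ℝ) :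
    rescaledKernel α m M (cutoffAmplitude n ψ) T ρ = ∫ x in Ioi (0 : ℝ),
      quadPhase T 0 x * (cutoffAmplitude n ψ x * (poissonIntegral α (ρ * x) : ℂ)) := by
  rw [rescaledKernel, intervalIntegral.integral_of_le hmM]
  refine (setIntegral_eq_of_subset_of_forall_sdiff_eq_zero measurableSet_Ioi
    (fun x hx => hm.trans hx.1) fun x hx => ?_).symm
  have hx0 : 0 < x := hx.1
  have hψx : x ^ 2 ∉ tsupport ψ := fun hmem => hx.2
    ⟨lt_of_pow_lt_pow_left₀ 2 hx0.le (hψ hmem).1,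
      (lt_of_pow_lt_pow_left₀ 2 (hm.le.trans hmM) (hψ hmem).2).le⟩
  simp [(cutoffAmplitude_eventuallyEq_zero n hψx).eq_of_nhds]

lemma quadPhase_div_sq_mul {h : ℝ} (hh : h ≠ 0) (t x : ℝ) :
    quadPhase (t / h ^ 2) 0 (h * x) = Complex.exp (Complex.I * t * x ^ 2) := by
  have hphase : t / h ^ 2 * (h * x) ^ 2 + 0 * (h * x) = t * x ^ 2 := by field_simp; ring
  rw [quadPhase, hphase]
  push_cast
  ring_nf

/-- The substitution `x = hλ`. -/
lemma exists_freeKernel_eq_mul_rescaledKernel (hn : 2 ≤ n) {m M : ℝ} (hm : 0 < m) (hmM : m ≤ M)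
    (hψ : tsupport ψ ⊆ Ioo (m ^ 2) (M ^ 2)) :
    ∃ c : ℝ, ∀ h σ t : ℝ, 0 < h → 0 < σ →
      freeKernel n ψ h σ t = ((c * (h ^ n)⁻¹ : ℝ) : ℂ) *
        rescaledKernel (((n : ℝ) - 3) / 2) m M (cutoffAmplitude n ψ) (t / h ^ 2) (σ / h) := by
  obtain ⟨c, hc⟩ := exists_mul_calJ_eq_mul_cutoffAmplitude hn ψ
  refine ⟨(2 * π) ^ (-(((n : ℝ) - 2) / 2) - 1) * c, fun h σ t hh hσ => ?_⟩
  set G : ℝ → ℂ := fun x => quadPhase (t / h ^ 2) 0 x *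
    (cutoffAmplitude n ψ x * (poissonIntegral (((n : ℝ) - 3) / 2) (σ / h * x) : ℂ)) with hG
  have hintegrand : ∫ lam in Ioi (0 : ℝ),
      Complex.exp (Complex.I * t * lam ^ 2) * ((ψ (h ^ 2 * lam ^ 2) : ℝ) : ℂ) *
        ((calJ (((n : ℝ) - 2) / 2) (σ * lam) : ℝ) : ℂ) * (lam : ℂ) =
      ∫ lam in Ioi (0 : ℝ),
        ((c * σ ^ (2 * (((n : ℝ) - 2) / 2)) * (h ^ (n - 1))⁻¹ : ℝ) : ℂ) * G (h * lam) := by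
    refine setIntegral_congr_fun measurableSet_Ioi fun x (hx : 0 < x) => ?_
    have hcx := hc h σ x hh hσ hx
    simp only [hG, quadPhase_div_sq_mul hh.ne']
    push_cast at hcx ⊢
    linear_combination Complex.exp (Complex.I * t * x ^ 2) * hcx
  have hscale : ∫ lam in Ioi (0 : ℝ), G (h * lam) = h⁻¹ • ∫ x in Ioi (0 : ℝ), G x := by
    simpa only [mul_zero] using integral_comp_mul_left_Ioi G 0 hh
  rw [freeKernel, hintegrand, integral_const_mul, hscale, rescaledKernel_cutoffAmplitude hm hmM hψ,
    neg_mul, rpow_neg hσ.le, Complex.real_smul, ← mul_assoc, ← mul_assoc]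
  congr 1
  norm_cast
  rw [← mul_pow_sub_one (by omega : n ≠ 0) h]
  field_simp

lemma inv_pow_mul_rpow_div_sq_mul_rpow_div {h σ : ℝ} (hh : 0 < h) (hσ : 0 ≤ σ) (n : ℕ) (s t : ℝ) :
    (h ^ n)⁻¹ * (|t / h ^ 2| ^ (-s - 1 / 2) * (σ / h) ^ (s - ((n : ℝ) - 1) / 2)) =
      h ^ (s - ((n : ℝ) - 1) / 2) * |t| ^ (-s - 1 / 2) * σ ^ (s - ((n : ℝ) - 1) / 2) := by
  have hexp : (h ^ n)⁻¹ * (h ^ (2 * (-s - 1 / 2)))⁻¹ * (h ^ (s - ((n : ℝ) - 1) / 2))⁻¹ =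
      h ^ (s - ((n : ℝ) - 1) / 2) := by
    rw [← rpow_natCast, ← rpow_neg hh.le, ← rpow_neg hh.le, ← rpow_neg hh.le, ← rpow_add hh,
      ← rpow_add hh]
    congr 1
    ring
  rw [rpow_mul hh.le, rpow_two] at hexp
  rw [abs_div, abs_of_nonneg (sq_nonneg h), div_rpow (abs_nonneg t) (sq_nonneg h),
    div_rpow hσ hh.le]
  linear_combination |t| ^ (-s - 1 / 2) * σ ^ (s - ((n : ℝ) - 1) / 2) * hexp

end FreeKernel

theorem freeKernel_bound_general
    (n : ℕ) (hn : 2 ≤ n) (ψ : ℝ → ℝ) (hψ : IsCutoff ψ)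
    (s : ℝ) (hs0 : 0 ≤ s) (hs1 : s ≤ ((n : ℝ) - 1) / 2) :
    ∃ C : ℝ, 0 < C ∧ ∀ t : ℝ, t ≠ 0 → ∀ σ : ℝ, 0 < σ → ∀ h : ℝ, 0 < h →
      ‖freeKernel n ψ h σ t‖ ≤
        C * h ^ (s - ((n : ℝ) - 1) / 2) * |t| ^ (-s - 1 / 2) *
          σ ^ (-((n : ℝ) - 1) / 2 + s) := by
  have hα : -1 < ((n : ℝ) - 3) / 2 := by
    have : (2 : ℝ) ≤ n := by exact_mod_cast hn
    linarith
  have hβ : ((n : ℝ) - 3) / 2 + 1 = ((n : ℝ) - 1) / 2 := by ring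
  obtain ⟨m, M, hm, hmM, hsupp⟩ := hψ.exists_tsupport_subset_Ioo_sq
  obtain ⟨c, hc⟩ := exists_freeKernel_eq_mul_rescaledKernel hn hm hmM hsupp
  obtain ⟨C, hC0, hC⟩ := exists_norm_rescaledKernel_le_rpow_mul_rpow hα hm hmM
    (contDiff_cutoffAmplitude n hψ.1)
    (cutoffAmplitude_eventuallyEq_zero n fun hmem => (hsupp hmem).1.false)
    (cutoffAmplitude_eventuallyEq_zero n fun hmem => (hsupp hmem).2.false) hs0 (hβ ▸ hs1)
  rw [hβ] at hC
  refine ⟨|c| * C + 1, by positivity, fun t ht σ hσ h hh => ?_⟩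
  calc ‖freeKernel n ψ h σ t‖
      = |c| * (h ^ n)⁻¹ * ‖rescaledKernel (((n : ℝ) - 3) / 2) m M (cutoffAmplitude n ψ)
          (t / h ^ 2) (σ / h)‖ := by
        rw [hc h σ t hh hσ, norm_mul, Complex.norm_real, norm_mul, norm_eq_abs,
          norm_of_nonneg (by positivity)]
    _ ≤ |c| * (h ^ n)⁻¹ *
          (C * |t / h ^ 2| ^ (-s - 1 / 2) * (σ / h) ^ (s - ((n : ℝ) - 1) / 2)) := by
        gcongr
        exact hC _ _ (div_ne_zero ht (by positivity)) (by positivity)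
    _ = |c| * C * (h ^ (s - ((n : ℝ) - 1) / 2) * |t| ^ (-s - 1 / 2) *
          σ ^ (s - ((n : ℝ) - 1) / 2)) := by
        rw [← inv_pow_mul_rpow_div_sq_mul_rpow_div hh hσ.le]
        ring
    _ ≤ (|c| * C + 1) * (h ^ (s - ((n : ℝ) - 1) / 2) * |t| ^ (-s - 1 / 2) *
          σ ^ (s - ((n : ℝ) - 1) / 2)) := by
        gcongr
        exact le_add_of_nonneg_right zero_le_one
    _ = _ := by rw [neg_div, neg_add_eq_sub, ← mul_assoc, ← mul_assoc]

/-- **estimate (2.5).** For every `0 ≤ s ≤ (n−1)/2` there is `C > 0` with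
`|K_h(σ,t)| ≤ C h^{s-(n-1)/2} |t|^{-s-1/2} σ^{-(n-1)/2+s}` for all `t ≠ 0`, `σ > 0`,
`0 < h ≤ 1`. -/
theorem freeKernel_bound
    (n : ℕ) (hn : 4 ≤ n) (ψ : ℝ → ℝ) (hψ : IsCutoff ψ)
    (s : ℝ) (hs0 : 0 ≤ s) (hs1 : s ≤ ((n : ℝ) - 1) / 2) :
    ∃ C : ℝ, 0 < C ∧ ∀ t : ℝ, t ≠ 0 → ∀ σ : ℝ, 0 < σ → ∀ h : ℝ, 0 < h → h ≤ 1 →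
      ‖freeKernel n ψ h σ t‖ ≤
        C * h ^ (s - ((n : ℝ) - 1) / 2) * |t| ^ (-s - 1 / 2) *
          σ ^ (-((n : ℝ) - 1) / 2 + s) := by
  obtain ⟨C, hC0, hC⟩ := freeKernel_bound_general n (by omega) ψ hψ s hs0 hs1
  exact ⟨C, hC0, fun t ht σ hσ h hh _ => hC t ht σ hσ h hh⟩
end
end

section
/- Let n ≥ 4 be an integer, let a > 0, and let χ_a ∈ C^∞(ℝ) be real-valued, supported in [a,+∞), with χ_a = 1 on [2a,+∞). Then there exists a constant C > 0, independent of t and σ, such that for all t ≠ 0 and all σ ∈ ℝ, |∫₀^∞ e^{itλ² + iσλ} λ^{(n-1)/2} χ_a(λ²) dλ| ≤ C |t|^{-n/2} ⟨σ⟩^{(n-1)/2}. -/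
open MeasureTheory Filter Topology Real Set

noncomputable section

/-- `⟨σ⟩ = (1+σ²)^{1/2}`. -/
def jbR (r : ℝ) : ℝ := Real.sqrt (1 + r ^ 2)

/-- A real-valued `C^∞(ℝ)` function supported in `[a,+∞)` which equals `1` on `[2a,+∞)`. -/
def IsChi (a : ℝ) (χ : ℝ → ℝ) : Prop :=
  ContDiff ℝ (⊤ : ℕ∞) χ ∧ Function.support χ ⊆ Set.Ici a ∧ ∀ x, 2 * a ≤ x → χ x = 1

/-!
Write `ζ = σ + ie`, with `e > 0` the Abel regularization, and let the amplitude be any function of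
order `b ≥ 0`, such as `λ ^ b χ(λ²)`. Since `e^{i(tλ² + ζλ)}` has derivative
`i(2tλ + ζ) e^{i(tλ² + ζλ)}`, integrating by parts against `g / λ` expresses the integral with
amplitude `g` through those with amplitudes `g / λ` and `(g / λ)'`, of orders `b - 1` and `b - 2`,
at the price of a factor `⟨σ⟩ / |t|`. Iterating down to absolutely convergent integrals shows that
the limit `e → 0` exists; for the uniform bound `|t|^{-1/2} (⟨σ⟩ / |t|)^b` it reduces the claim to
`0 ≤ b < 1`.

There one integrates by parts the other way, against the tail `∫_x^∞ e^{i(ty² + ζy)} dy`. By van der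
Corput it is `O(|t|^{-1/2})`, which settles `b = 0` because `g'` is then integrable. Beyond
`|σ| / |t|`, hence away from the stationary point, it is also `O(1 / (|t| x))`. For `0 < b < 1`,
cutting the integral of `x ^ (b - 1)` times the tail at `x = ⟨σ⟩ / |t|` gives the bound as long as
`|t| ≤ ⟨σ⟩`, while for `⟨σ⟩ ≤ |t|` the bound of exponent `1` is stronger than that of exponent `b`.
-/

/-! ### Amplitudes -/

/-- Amplitudes of order `p`: functions that are smooth on `(0, ∞)`, vanish near `0` and are a
multiple of `x ^ p` near `∞`. This class of symbols contains `λ ^ p χ(λ²)` and is closed under the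
operations which integration by parts performs. Values on `(-∞, 0]` are irrelevant. -/
structure IsAmplitude (p : ℝ) (g : ℝ → ℂ) : Prop where
  contDiffOn : ContDiffOn ℝ (⊤ : ℕ∞) g (Ioi 0)
  eventually_eq_zero : ∀ᶠ x in 𝓝[>] 0, g x = 0
  eventually_eq_rpow : ∃ c : ℂ, ∀ᶠ x in atTop, g x = c * (x ^ p : ℝ)

namespace IsAmplitude

variable {p q : ℝ} {g : ℝ → ℂ}

theorem continuousOn (hg : IsAmplitude p g) : ContinuousOn g (Ioi 0) :=
  hg.contDiffOn.continuousOn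

theorem aestronglyMeasurable (hg : IsAmplitude p g) :
    AEStronglyMeasurable g (volume.restrict (Ioi 0)) :=
  hg.continuousOn.aestronglyMeasurable measurableSet_Ioi

theorem hasDerivAt (hg : IsAmplitude p g) {x : ℝ} (hx : 0 < x) : HasDerivAt g (deriv g x) x :=
  ((hg.contDiffOn.contDiffAt (Ioi_mem_nhds hx)).differentiableAt (by simp)).hasDerivAt

theorem deriv_eventually_eq_zero (hg : IsAmplitude p g) : ∀ᶠ x in 𝓝[>] 0, deriv g x = 0 := by
  obtain ⟨r, hr, hzero⟩ := mem_nhdsGT_iff_exists_Ioo_subset.1 hg.eventually_eq_zero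
  filter_upwards [Ioo_mem_nhdsGT hr] with x hx
  have : g =ᶠ[𝓝 x] fun _ ↦ 0 := eventually_of_mem (Ioo_mem_nhds hx.1 hx.2) hzero
  simp [this.deriv_eq]

theorem exists_deriv_eventually_eq (hg : IsAmplitude p g) :
    ∃ c : ℂ, ∀ᶠ x in atTop, deriv g x = c * ((p * x ^ (p - 1) : ℝ) : ℂ) := by
  obtain ⟨c, hc⟩ := hg.eventually_eq_rpow
  obtain ⟨R, hR⟩ := eventually_atTop.1 hc
  refine ⟨c, ?_⟩
  filter_upwards [eventually_gt_atTop R, eventually_gt_atTop 0] with x hxR hx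
  have heq : g =ᶠ[𝓝 x] fun y ↦ c * (y ^ p : ℝ) :=
    eventually_of_mem (Ioi_mem_nhds hxR) fun y hy ↦ hR y (le_of_lt hy)
  rw [heq.deriv_eq]
  exact ((Real.hasDerivAt_rpow_const (.inl hx.ne')).ofReal_comp.const_mul c).deriv

protected theorem deriv (hg : IsAmplitude p g) : IsAmplitude (p - 1) (deriv g) := by
  refine ⟨hg.contDiffOn.deriv_of_isOpen isOpen_Ioi (by simp), hg.deriv_eventually_eq_zero, ?_⟩
  obtain ⟨c, hc⟩ := hg.exists_deriv_eventually_eq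
  refine ⟨c * p, hc.mono fun x hx ↦ ?_⟩
  rw [hx]
  push_cast
  ring

theorem deriv_of_order_zero (hg : IsAmplitude 0 g) (q : ℝ) : IsAmplitude q (deriv g) := by
  refine ⟨hg.deriv.contDiffOn, hg.deriv_eventually_eq_zero, 0, ?_⟩
  obtain ⟨c, hc⟩ := hg.exists_deriv_eventually_eq
  filter_upwards [hc] with x hx
  simp [hx]

theorem mul_rpow (hg : IsAmplitude p g) (q : ℝ) :
    IsAmplitude (p + q) (fun x ↦ g x * (x ^ q : ℝ)) := by
  refine ⟨hg.contDiffOn.mul fun x hx ↦ ?_, hg.eventually_eq_zero.mono fun x hx ↦ by simp [hx], ?_⟩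
  · exact (Complex.ofRealCLM.contDiff.contDiffAt.comp x
      (Real.contDiffAt_rpow_const_of_ne (ne_of_gt hx))).contDiffWithinAt
  · obtain ⟨c, hc⟩ := hg.eventually_eq_rpow
    refine ⟨c, ?_⟩
    filter_upwards [hc, eventually_gt_atTop 0] with x hx hx0
    rw [hx, Real.rpow_add hx0]
    push_cast
    ring

theorem div_id (hg : IsAmplitude p g) : IsAmplitude (p - 1) (fun x ↦ g x / x) := by
  simpa [div_eq_mul_inv, sub_eq_add_neg, Real.rpow_neg_one] using hg.mul_rpow (-1)

/-- Vanishing near `0` is what allows the bound with every exponent above the order. -/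
theorem exists_norm_le_rpow (hg : IsAmplitude p g) (hpq : p ≤ q) :
    ∃ M, 0 ≤ M ∧ ∀ x, 0 < x → ‖g x‖ ≤ M * x ^ q := by
  obtain ⟨r, hr, hzero⟩ := mem_nhdsGT_iff_exists_Ioo_subset.1 hg.eventually_eq_zero
  obtain ⟨c, hc⟩ := hg.eventually_eq_rpow
  obtain ⟨R, hR⟩ := eventually_atTop.1 hc
  have hcont : ContinuousOn (fun x ↦ ‖g x‖ * x ^ (-q)) (Icc r (max R 1)) := fun x hx ↦ by
    have hx0 : 0 < x := hr.trans_le hx.1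
    exact ((hg.continuousOn.continuousAt (Ioi_mem_nhds hx0)).norm.mul
      (Real.continuousAt_rpow_const _ _ (.inl hx0.ne'))).continuousWithinAt
  obtain ⟨M, hM⟩ := isCompact_Icc.exists_bound_of_continuousOn hcont
  refine ⟨max M ‖c‖, (norm_nonneg c).trans (le_max_right _ _), fun x hx ↦ ?_⟩
  have hxq : 0 < x ^ q := Real.rpow_pos_of_pos hx q
  rcases lt_or_ge x r with hxr | hrx
  · have : g x = 0 := hzero ⟨hx, hxr⟩
    rw [this, norm_zero]
    positivity
  rcases le_or_gt x (max R 1) with hxR | hRx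
  · have : ‖g x‖ / x ^ q ≤ M := by
      simpa [Real.rpow_neg hx.le, div_eq_mul_inv, abs_of_pos hxq] using hM x ⟨hrx, hxR⟩
    rw [div_le_iff₀ hxq] at this
    exact this.trans (by gcongr; exact le_max_left _ _)
  · have hx1 : 1 ≤ x := (le_max_right R 1).trans hRx.le
    rw [hR x ((le_max_left R 1).trans hRx.le), norm_mul, Complex.norm_real,
      Real.norm_of_nonneg (by positivity)]
    gcongr
    exact le_max_right _ _

theorem integrableOn (hg : IsAmplitude p g) (hp : p < -1) : IntegrableOn g (Ioi 0) := by
  obtain ⟨M₀, -, hM₀⟩ := hg.exists_norm_le_rpow (show p ≤ 0 by linarith)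
  obtain ⟨M, -, hM⟩ := hg.exists_norm_le_rpow le_rfl
  rw [← Ioc_union_Ioi_eq_Ioi zero_le_one]
  refine .union ?_ ?_
  · refine .of_bound (by simp) (hg.aestronglyMeasurable.mono_set Ioc_subset_Ioi_self) M₀ ?_
    filter_upwards [ae_restrict_mem measurableSet_Ioc] with x hx
    simpa using hM₀ x hx.1
  · refine ((integrableOn_Ioi_rpow_of_lt hp one_pos).const_mul M).mono'
      (hg.aestronglyMeasurable.mono_set (Ioi_subset_Ioi zero_le_one)) ?_
    filter_upwards [ae_restrict_mem measurableSet_Ioi] with x hx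
    exact hM x (one_pos.trans hx)

theorem integrableOn_mul_of_exp_decay (hg : IsAmplitude p g) {v : ℝ → ℂ} {ε C : ℝ} (hε : 0 < ε)
    (hv : ContinuousOn v (Ioi 0)) (hvC : ∀ x, 0 < x → ‖v x‖ ≤ C * Real.exp (-ε * x)) :
    IntegrableOn (fun x ↦ g x * v x) (Ioi 0) := by
  obtain ⟨M, hM, hgM⟩ := hg.exists_norm_le_rpow (le_max_left p 0)
  have hint : IntegrableOn (fun x : ℝ ↦ x ^ max p 0 * Real.exp (-ε * x)) (Ioi 0) := by
    simpa using integrableOn_rpow_mul_exp_neg_mul_rpow (p := 1)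
      (neg_one_lt_zero.trans_le (le_max_right p 0)) one_pos hε
  refine (hint.const_mul (M * C)).mono'
    ((hg.continuousOn.mul hv).aestronglyMeasurable measurableSet_Ioi) ?_
  filter_upwards [ae_restrict_mem measurableSet_Ioi] with x hx
  have hx : 0 < x := hx
  calc ‖g x * v x‖ = ‖g x‖ * ‖v x‖ := norm_mul _ _
    _ ≤ M * x ^ max p 0 * (C * Real.exp (-ε * x)) := by
      gcongr
      exacts [hgM x hx, hvC x hx]
    _ = M * C * (x ^ max p 0 * Real.exp (-ε * x)) := by ring

theorem integral_mul_deriv_eq_neg (hg : IsAmplitude p g) {v v' : ℝ → ℂ}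
    (hv : ∀ x, 0 < x → HasDerivAt v (v' x) x)
    (hgv : IntegrableOn (fun x ↦ g x * v x) (Ioi 0))
    (hgv' : IntegrableOn (fun x ↦ g x * v' x) (Ioi 0))
    (hg'v : IntegrableOn (fun x ↦ deriv g x * v x) (Ioi 0)) :
    ∫ x in Ioi 0, g x * v' x = -∫ x in Ioi 0, deriv g x * v x := by
  have hzero : Tendsto (fun x ↦ g x * v x) (𝓝[>] 0) (𝓝 0) :=
    tendsto_const_nhds.congr' (hg.eventually_eq_zero.mono fun x hx ↦ by simp [hx])
  have hinfty : Tendsto (fun x ↦ g x * v x) atTop (𝓝 0) :=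
    tendsto_zero_of_hasDerivAt_of_integrableOn_Ioi
      (fun x hx ↦ (hg.hasDerivAt hx).mul (hv x hx)) (hg'v.add hgv') hgv
  simpa using integral_Ioi_mul_deriv_eq_deriv_mul (fun x hx ↦ hg.hasDerivAt hx) hv hgv' hg'v
    hzero hinfty

end IsAmplitude

theorem IsChi.isAmplitude_rpow_mul_sq {a : ℝ} {χ : ℝ → ℝ} (hχ : IsChi a χ) (ha : 0 < a) (b : ℝ) :
    IsAmplitude b (fun x ↦ ((x ^ b * χ (x ^ 2) : ℝ) : ℂ)) := by
  obtain ⟨hsmooth, hsupp, hone⟩ := hχ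
  have hcutoff : IsAmplitude 0 (fun x ↦ (χ (x ^ 2) : ℂ)) := by
    refine ⟨?_, ?_, 1, ?_⟩
    · exact (Complex.ofRealCLM.contDiff.comp (hsmooth.comp (contDiff_id.pow 2))).contDiffOn
    · filter_upwards [Ioo_mem_nhdsGT (Real.sqrt_pos.2 ha)] with x hx
      have : x ^ 2 ∉ Function.support χ := fun h ↦
        (Real.lt_sqrt hx.1.le).1 hx.2 |>.not_ge (hsupp h)
      simpa using this
    · filter_upwards [eventually_ge_atTop √(2 * a)] with x hx
      simp [hone _ (Real.sqrt_le_iff.1 hx).2]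
  simpa [mul_comm] using hcutoff.mul_rpow b

/-! ### Chirps -/

/-- The chirp `e^{i(t x² + ζ x)}`. Its complex frequency `ζ = σ + ie` contains the regularizing
factor `e^{-ex}`. -/
def chirp (t : ℝ) (ζ : ℂ) (x : ℝ) : ℂ := Complex.exp (Complex.I * (t * x ^ 2 + ζ * x))

/-- The primitive of `-chirp t ζ` that vanishes at `+∞`, for `0 < ζ.im`. -/
def chirpTail (t : ℝ) (ζ : ℂ) (x : ℝ) : ℂ := ∫ y in Ioi x, chirp t ζ y

section Chirp

variable {t : ℝ} {ζ : ℂ} {x u v m : ℝ}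

theorem norm_chirp (t : ℝ) (ζ : ℂ) (x : ℝ) : ‖chirp t ζ x‖ = Real.exp (-ζ.im * x) := by
  rw [chirp, Complex.norm_exp]
  simp [pow_two]

theorem norm_chirp_le_one (hζ : 0 ≤ ζ.im) (hx : 0 ≤ x) : ‖chirp t ζ x‖ ≤ 1 := by
  rw [norm_chirp, Real.exp_le_one_iff]
  nlinarith

@[fun_prop]
theorem continuous_chirp (t : ℝ) (ζ : ℂ) : Continuous (chirp t ζ) := by
  unfold chirp
  fun_prop

theorem hasDerivAt_chirp (t : ℝ) (ζ : ℂ) (x : ℝ) :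
    HasDerivAt (chirp t ζ) (Complex.I * (2 * t * x + ζ) * chirp t ζ x) x := by
  have hid : HasDerivAt (fun x : ℝ ↦ (x : ℂ)) 1 x := Complex.ofRealCLM.hasDerivAt
  refine ((((hid.pow 2).const_mul (t : ℂ)).add (hid.const_mul ζ)).const_mul
    Complex.I).cexp.congr_deriv ?_
  simp [chirp]
  ring

theorem integrableOn_chirp (t : ℝ) (hζ : 0 < ζ.im) (x : ℝ) :
    IntegrableOn (chirp t ζ) (Ioi x) := by
  refine (integrableOn_exp_mul_Ioi (neg_lt_zero.2 hζ) x).mono'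
    (continuous_chirp t ζ).aestronglyMeasurable (.of_forall fun y ↦ ?_)
  rw [norm_chirp]

theorem integral_abs_div_sq_le (hm : 0 < m) (huv : u ≤ v) {σ : ℝ}
    (h : ∀ x ∈ Icc u v, m ≤ |2 * t * x + σ|) :
    ∫ x in u..v, |2 * t| / (2 * t * x + σ) ^ 2 ≤ 2 / m := by
  have hne : ∀ x ∈ Icc u v, 2 * t * x + σ ≠ 0 := fun x hx ↦ abs_pos.1 (hm.trans_le (h x hx))
  have hderiv : ∀ x ∈ uIcc u v, HasDerivAt (fun x ↦ -(SignType.sign (2 * t) / (2 * t * x + σ)))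
      (|2 * t| / (2 * t * x + σ) ^ 2) x := fun x hx ↦ by
    rw [uIcc_of_le huv] at hx
    have hlin : HasDerivAt (fun x ↦ 2 * t * x + σ) (2 * t) x := by
      simpa using ((hasDerivAt_id x).const_mul (2 * t)).add_const σ
    refine ((hasDerivAt_const x _).div hlin (hne x hx)).neg.congr_deriv ?_
    rw [← sign_mul_self]
    ring
  have hbound : ∀ x ∈ Icc u v, |SignType.sign (2 * t) / (2 * t * x + σ)| ≤ 1 / m := fun x hx ↦ by
    rw [abs_div]
    gcongr
    · rcases lt_trichotomy (2 * t) 0 with h | h | h <;> simp [h]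
    · exact h x hx
  rw [intervalIntegral.integral_eq_sub_of_hasDerivAt hderiv]
  · have hu := abs_le.1 (hbound u (left_mem_Icc.2 huv))
    have hv := abs_le.1 (hbound v (right_mem_Icc.2 huv))
    linarith [show 2 / m = 1 / m + 1 / m by ring]
  · refine ContinuousOn.intervalIntegrable fun x hx ↦ ContinuousAt.continuousWithinAt ?_
    rw [uIcc_of_le huv] at hx
    exact continuousAt_const.div (by fun_prop) (pow_ne_zero 2 (hne x hx))

theorem abs_deriv_phase_le_norm (t : ℝ) (ζ : ℂ) (x : ℝ) :
    |2 * t * x + ζ.re| ≤ ‖2 * t * x + ζ‖ := by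
  simpa using Complex.abs_re_le_norm (2 * t * x + ζ)

theorem hasDerivAt_chirp_div (hx : 2 * t * x + ζ ≠ 0) :
    HasDerivAt (fun y : ℝ ↦ chirp t ζ y / (2 * t * y + ζ))
      (Complex.I * chirp t ζ x - 2 * t * (chirp t ζ x / (2 * t * x + ζ) ^ 2)) x := by
  have hlin : HasDerivAt (fun y : ℝ ↦ 2 * t * y + ζ) (2 * t) x :=
    (((Complex.ofRealCLM.hasDerivAt (x := x)).const_mul (2 * t : ℂ)).add_const ζ).congr_deriv
      (by simp)
  refine ((hasDerivAt_chirp t ζ x).div hlin hx).congr_deriv ?_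
  field_simp

theorem norm_integral_chirp_div_sq_le (hζ : 0 ≤ ζ.im) (hu : 0 ≤ u) (huv : u ≤ v)
    (hm : 0 < m) (h : ∀ x ∈ Icc u v, m ≤ |2 * t * x + ζ.re|) :
    ‖∫ x in u..v, 2 * t * (chirp t ζ x / (2 * t * x + ζ) ^ 2)‖ ≤ 2 / m := by
  refine (intervalIntegral.norm_integral_le_of_norm_le huv (.of_forall fun x hx ↦ ?_) ?_).trans
    (integral_abs_div_sq_le hm huv h)
  · have hx : x ∈ Icc u v := Ioc_subset_Icc_self hx
    have hpos : 0 < |2 * t * x + ζ.re| := hm.trans_le (h x hx)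
    have : ‖(2 * t : ℂ)‖ = |2 * t| := by simp
    rw [norm_mul, this, norm_div, norm_pow, div_eq_mul_one_div |2 * t|,
      ← sq_abs (2 * t * x + ζ.re)]
    gcongr
    · exact norm_chirp_le_one hζ (hu.trans hx.1)
    · exact abs_deriv_phase_le_norm t ζ x
  · refine ContinuousOn.intervalIntegrable fun x hx ↦ ContinuousAt.continuousWithinAt ?_
    rw [uIcc_of_le huv] at hx
    exact continuousAt_const.div (by fun_prop)
      (pow_ne_zero 2 (abs_pos.1 (hm.trans_le (h x hx))))

theorem norm_integral_chirp_le_of_le_deriv_phase (hζ : 0 ≤ ζ.im) (hu : 0 ≤ u) (huv : u ≤ v)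
    (hm : 0 < m) (h : ∀ x ∈ Icc u v, m ≤ |2 * t * x + ζ.re|) :
    ‖∫ x in u..v, chirp t ζ x‖ ≤ 4 / m := by
  have hphase : ∀ x ∈ Icc u v, m ≤ ‖2 * t * x + ζ‖ := fun x hx ↦
    (h x hx).trans (abs_deriv_phase_le_norm t ζ x)
  have hne : ∀ x ∈ Icc u v, 2 * t * x + ζ ≠ 0 := fun x hx ↦
    norm_pos_iff.1 (hm.trans_le (hphase x hx))
  have hint : IntervalIntegrable (fun x ↦ Complex.I * chirp t ζ x) volume u v :=
    Continuous.intervalIntegrable (by fun_prop) u v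
  have hint' : IntervalIntegrable (fun x : ℝ ↦ 2 * t * (chirp t ζ x / (2 * t * x + ζ) ^ 2))
      volume u v := by
    refine ContinuousOn.intervalIntegrable (continuousOn_const.mul ?_)
    rw [uIcc_of_le huv]
    exact ContinuousOn.div (by fun_prop) (by fun_prop) fun x hx ↦ pow_ne_zero 2 (hne x hx)
  have hparts := intervalIntegral.integral_eq_sub_of_hasDerivAt
    (fun x hx ↦ hasDerivAt_chirp_div (hne x (uIcc_of_le huv ▸ hx))) (hint.sub hint')
  rw [intervalIntegral.integral_sub hint hint', intervalIntegral.integral_const_mul,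
    sub_eq_iff_eq_add] at hparts
  have hboundary : ∀ x ∈ Icc u v, ‖chirp t ζ x / (2 * t * x + ζ)‖ ≤ 1 / m := fun x hx ↦ by
    rw [norm_div]
    gcongr
    exacts [norm_chirp_le_one hζ (hu.trans hx.1), hphase x hx]
  calc ‖∫ x in u..v, chirp t ζ x‖ = ‖Complex.I * ∫ x in u..v, chirp t ζ x‖ := by simp
    _ ≤ 1 / m + 1 / m + 2 / m := by
      rw [hparts]
      exact norm_add_le_of_le (norm_sub_le_of_le (hboundary v (right_mem_Icc.2 huv))
        (hboundary u (left_mem_Icc.2 huv))) (norm_integral_chirp_div_sq_le hζ hu huv hm h)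
    _ = 4 / m := by ring

theorem integral_chirp_add_chirpTail (t : ℝ) (hζ : 0 < ζ.im) (u v : ℝ) :
    (∫ x in u..v, chirp t ζ x) + chirpTail t ζ v = chirpTail t ζ u := by
  rw [← intervalIntegral.integral_Ioi_sub_Ioi' (integrableOn_chirp t hζ u)
    (integrableOn_chirp t hζ v)]
  exact sub_add_cancel _ _

theorem norm_chirpTail_le_of_le_deriv_phase (hζ : 0 < ζ.im) (hx : 0 ≤ x) (hm : 0 < m)
    (h : ∀ y, x ≤ y → m ≤ |2 * t * y + ζ.re|) : ‖chirpTail t ζ x‖ ≤ 4 / m :=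
  le_of_tendsto (intervalIntegral_tendsto_integral_Ioi x (integrableOn_chirp t hζ x)
    tendsto_id).norm <| (eventually_ge_atTop x).mono fun _ hv ↦
      norm_integral_chirp_le_of_le_deriv_phase hζ.le hx hv hm fun y hy ↦ h y hy.1

theorem two_mul_sqrt_le_abs_deriv_phase (ht : t ≠ 0) {σ : ℝ}
    (hx : 1 / √|t| ≤ |x + σ / (2 * t)|) : 2 * √|t| ≤ |2 * t * x + σ| := by
  have : 0 < √|t| := Real.sqrt_pos.2 (abs_pos.2 ht)
  calc 2 * √|t| = 2 * (√|t| * √|t|) * (1 / √|t|) := by field_simp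
    _ = 2 * |t| * (1 / √|t|) := by rw [Real.mul_self_sqrt (abs_nonneg t)]
    _ ≤ 2 * |t| * |x + σ / (2 * t)| := by gcongr
    _ = |2 * t * (x + σ / (2 * t))| := by rw [abs_mul, abs_mul, abs_two]
    _ = |2 * t * x + σ| := by congr 1; field_simp

theorem norm_integral_chirp_le_sub (hζ : 0 ≤ ζ.im) (hu : 0 ≤ u) (huv : u ≤ v) :
    ‖∫ x in u..v, chirp t ζ x‖ ≤ v - u := by
  refine (intervalIntegral.norm_integral_le_of_norm_le_const (C := 1) fun x hx ↦ ?_).trans_eq ?_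
  · rw [uIoc_of_le huv] at hx
    exact norm_chirp_le_one hζ (hu.trans hx.1.le)
  · rw [one_mul, abs_of_nonneg (sub_nonneg.2 huv)]

/-- Van der Corput's bound: the first-derivative test applies outside the interval of radius
`1 / √|t|` around the stationary point `-ζ.re / (2 t)`. -/
theorem norm_chirpTail_le_inv_sqrt (ht : t ≠ 0) (hζ : 0 < ζ.im) (hx : 0 ≤ x) :
    ‖chirpTail t ζ x‖ ≤ 6 / √|t| := by
  have : 0 < √|t| := Real.sqrt_pos.2 (abs_pos.2 ht)
  set d := ζ.re / (2 * t)
  have hright : ∀ y, 0 ≤ y → 1 / √|t| ≤ y + d → ‖chirpTail t ζ y‖ ≤ 2 / √|t| :=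
    fun y hy hyd ↦ (norm_chirpTail_le_of_le_deriv_phase hζ hy (m := 2 * √|t|) (by positivity)
      fun z hz ↦ two_mul_sqrt_le_abs_deriv_phase ht (le_abs.2 (.inl (by linarith)))).trans_eq
        (by ring)
  have hmid : ∀ y, 0 ≤ y → -(1 / √|t|) ≤ y + d → ‖chirpTail t ζ y‖ ≤ 4 / √|t| :=
    fun y hy hyd ↦ by
      rcases le_total (1 / √|t|) (y + d) with h | h
      · exact (hright y hy h).trans (by gcongr; norm_num)
      have hyz : y ≤ 1 / √|t| - d := by linarith
      rw [← integral_chirp_add_chirpTail t hζ y (1 / √|t| - d)]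
      have hnear : ‖∫ x in y..1 / √|t| - d, chirp t ζ x‖ ≤ 2 / √|t| :=
        (norm_integral_chirp_le_sub hζ.le hy hyz).trans
          (by linarith [show 2 / √|t| = 1 / √|t| + 1 / √|t| by ring])
      exact (norm_add_le_of_le hnear (hright _ (hy.trans hyz) (by simp))).trans_eq (by ring)
  rcases le_total (-(1 / √|t|)) (x + d) with h | h
  · exact (hmid x hx h).trans (by gcongr; norm_num)
  have hxz : x ≤ -(1 / √|t|) - d := by linarith
  rw [← integral_chirp_add_chirpTail t hζ x (-(1 / √|t|) - d)]
  have hleft : ‖∫ x in x..-(1 / √|t|) - d, chirp t ζ x‖ ≤ 4 / (2 * √|t|) :=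
    norm_integral_chirp_le_of_le_deriv_phase hζ.le hx hxz (by positivity) fun y hy ↦
      two_mul_sqrt_le_abs_deriv_phase ht (le_abs.2 (.inr (by linarith [hy.2])))
  exact (norm_add_le_of_le hleft (hmid _ (hx.trans hxz) (by simp))).trans_eq (by ring)

/-- The threshold `|ζ.re| / |t|` is twice the distance of the stationary point from `0`. -/
theorem norm_chirpTail_le_inv (ht : t ≠ 0) (hζ : 0 < ζ.im) (hx : 0 < x)
    (hfar : |ζ.re| / |t| ≤ x) : ‖chirpTail t ζ x‖ ≤ 4 / (|t| * x) := by
  have ht' : 0 < |t| := abs_pos.2 ht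
  refine norm_chirpTail_le_of_le_deriv_phase hζ hx.le (by positivity) fun y hy ↦ ?_
  rw [div_le_iff₀ ht'] at hfar
  have hxy : |t| * x ≤ |t| * y := by gcongr
  calc |t| * x ≤ 2 * |t| * y - |ζ.re| := by linarith
    _ = |2 * t * y| - |-ζ.re| := by
      rw [abs_mul, abs_mul, abs_two, abs_of_pos (hx.trans_le hy), abs_neg]
    _ ≤ |2 * t * y + ζ.re| := by simpa using abs_sub_abs_le_abs_sub (2 * t * y) (-ζ.re)

theorem norm_chirpTail_le_exp (hζ : 0 < ζ.im) (t x : ℝ) :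
    ‖chirpTail t ζ x‖ ≤ 1 / ζ.im * Real.exp (-ζ.im * x) := by
  refine (norm_integral_le_integral_norm _).trans_eq ?_
  simp only [norm_chirp]
  rw [integral_exp_mul_Ioi (neg_lt_zero.2 hζ)]
  field_simp

theorem hasDerivAt_chirpTail (t : ℝ) (hζ : 0 < ζ.im) (x : ℝ) :
    HasDerivAt (chirpTail t ζ) (-chirp t ζ x) x := by
  have hsplit : chirpTail t ζ = fun y ↦ chirpTail t ζ 0 - ∫ z in (0 : ℝ)..y, chirp t ζ z :=
    funext fun y ↦ eq_sub_of_add_eq' (integral_chirp_add_chirpTail t hζ 0 y)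
  rw [hsplit]
  exact ((continuous_chirp t ζ).integral_hasStrictDerivAt 0 x).hasDerivAt.const_sub _

end Chirp

/-! ### Oscillatory integrals -/

/-- The oscillatory integral `∫₀^∞ e^{i(t x² + ζ x)} g(x) dx`, absolutely convergent when `g` is an
amplitude and `0 < ζ.im`; its limit as `ζ.im → 0` is the Abel regularization. -/
def chirpIntegral (t : ℝ) (ζ : ℂ) (g : ℝ → ℂ) : ℂ := ∫ x in Ioi 0, g x * chirp t ζ x

theorem norm_integral_Ioi_le_of_norm_le_rpow {E : Type*} [NormedAddCommGroup E]
    [NormedSpace ℝ E] {F : ℝ → E} {b A K₀ K₁ : ℝ} (hb : 0 < b) (hb1 : b < 1) (hA : 0 < A)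
    (hF : IntegrableOn F (Ioi 0))
    (hnear : ∀ x ∈ Ioc 0 A, ‖F x‖ ≤ K₀ * x ^ (b - 1))
    (hfar : ∀ x ∈ Ioi A, ‖F x‖ ≤ K₁ * x ^ (b - 2)) :
    ‖∫ x in Ioi 0, F x‖ ≤ K₀ * (A ^ b / b) + K₁ * (A ^ (b - 1) / (1 - b)) := by
  rw [← Ioc_union_Ioi_eq_Ioi hA.le, setIntegral_union (Ioc_disjoint_Ioi le_rfl) measurableSet_Ioi
    (hF.mono_set Ioc_subset_Ioi_self) (hF.mono_set (Ioi_subset_Ioi hA.le))]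
  refine norm_add_le_of_le ?_ ?_
  · have hint : IntegrableOn (fun x : ℝ ↦ x ^ (b - 1)) (Ioc 0 A) :=
      (intervalIntegrable_iff_integrableOn_Ioc_of_le hA.le).1
        (intervalIntegral.intervalIntegrable_rpow' (by linarith))
    refine (norm_integral_le_of_norm_le (hint.const_mul K₀)
      ((ae_restrict_mem measurableSet_Ioc).mono hnear)).trans_eq ?_
    rw [integral_const_mul, ← intervalIntegral.integral_of_le hA.le,
      integral_rpow (.inl (by linarith)), sub_add_cancel, Real.zero_rpow hb.ne', sub_zero]
  · refine (norm_integral_le_of_norm_le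
      ((integrableOn_Ioi_rpow_of_lt (by linarith) hA).const_mul K₁)
      ((ae_restrict_mem measurableSet_Ioi).mono hfar)).trans_eq ?_
    rw [integral_const_mul, integral_Ioi_rpow_of_lt (by linarith) hA, neg_div, ← div_neg]
    ring_nf

namespace IsAmplitude

variable {p : ℝ} {g : ℝ → ℂ} {t : ℝ} {ζ : ℂ}

theorem integrableOn_mul_chirp (hg : IsAmplitude p g) (t : ℝ) (hζ : 0 < ζ.im) :
    IntegrableOn (fun x ↦ g x * chirp t ζ x) (Ioi 0) :=
  hg.integrableOn_mul_of_exp_decay (C := 1) hζ (by fun_prop) fun x _ ↦ by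
    rw [norm_chirp, one_mul]

theorem integrableOn_mul_chirpTail (hg : IsAmplitude p g) (t : ℝ) (hζ : 0 < ζ.im) :
    IntegrableOn (fun x ↦ g x * chirpTail t ζ x) (Ioi 0) :=
  hg.integrableOn_mul_of_exp_decay hζ
    (fun x _ ↦ (hasDerivAt_chirpTail t hζ x).continuousAt.continuousWithinAt)
    fun x _ ↦ norm_chirpTail_le_exp hζ t x

theorem chirpIntegral_eq (hg : IsAmplitude p g) (ht : t ≠ 0) (hζ : 0 < ζ.im) :
    chirpIntegral t ζ g = (Complex.I * chirpIntegral t ζ (deriv fun x ↦ g x / x)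
      - ζ * chirpIntegral t ζ fun x ↦ g x / x) / (2 * t) := by
  have hh := hg.div_id
  have hgint := (hg.integrableOn_mul_chirp t hζ).const_mul (2 * t : ℂ)
  have hhint := (hh.integrableOn_mul_chirp t hζ).const_mul ζ
  have hsplit : ∀ x ∈ Ioi (0 : ℝ), Complex.I * (2 * t * (g x * chirp t ζ x)
      + ζ * (g x / x * chirp t ζ x)) = g x / x * (Complex.I * (2 * t * x + ζ) * chirp t ζ x) :=
    fun x hx ↦ by
      have : (x : ℂ) ≠ 0 := Complex.ofReal_ne_zero.2 (ne_of_gt hx)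
      field_simp
  have hparts := hh.integral_mul_deriv_eq_neg (fun x _ ↦ hasDerivAt_chirp t ζ x)
    (hh.integrableOn_mul_chirp t hζ)
    (IntegrableOn.congr_fun ((hgint.add hhint).const_mul Complex.I) hsplit measurableSet_Ioi)
    (hh.deriv.integrableOn_mul_chirp t hζ)
  rw [← setIntegral_congr_fun measurableSet_Ioi hsplit, integral_const_mul,
    integral_add hgint hhint, integral_const_mul, integral_const_mul] at hparts
  have : (t : ℂ) ≠ 0 := Complex.ofReal_ne_zero.2 ht
  simp only [chirpIntegral]
  rw [eq_div_iff (by simpa)]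
  linear_combination (-Complex.I) * hparts + (2 * t * (∫ x in Ioi 0, g x * chirp t ζ x)
    + ζ * ∫ x in Ioi 0, g x / x * chirp t ζ x) * Complex.I_sq

theorem chirpIntegral_eq_integral_deriv_mul_chirpTail (hg : IsAmplitude p g) (t : ℝ)
    (hζ : 0 < ζ.im) : chirpIntegral t ζ g = ∫ x in Ioi 0, deriv g x * chirpTail t ζ x := by
  have hparts := hg.integral_mul_deriv_eq_neg (fun x _ ↦ hasDerivAt_chirpTail t hζ x)
    (hg.integrableOn_mul_chirpTail t hζ)
    ((hg.integrableOn_mul_chirp t hζ).neg.congr_fun (fun x _ ↦ by simp) measurableSet_Ioi)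
    (hg.deriv.integrableOn_mul_chirpTail t hζ)
  simpa [chirpIntegral, integral_neg] using hparts

theorem exists_tendsto_chirpIntegral_of_lt (hg : IsAmplitude p g) (hp : p < -1) (t : ℝ) (ζ : ℂ) :
    ∃ L, Tendsto (fun z ↦ chirpIntegral t z g) (𝓝[{z | 0 < z.im}] ζ) (𝓝 L) := by
  refine ⟨chirpIntegral t ζ g, tendsto_integral_filter_of_dominated_convergence (fun x ↦ ‖g x‖)
    ?_ ?_ (hg.integrableOn hp).norm (.of_forall fun x ↦ ?_)⟩
  · exact .of_forall fun z ↦ hg.aestronglyMeasurable.mul (continuous_chirp t z).aestronglyMeasurable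
  · filter_upwards [self_mem_nhdsWithin] with z hz
    filter_upwards [ae_restrict_mem measurableSet_Ioi] with x hx
    rw [norm_mul]
    exact mul_le_of_le_one_right (norm_nonneg _) (norm_chirp_le_one (le_of_lt hz) (le_of_lt hx))
  · have : Continuous fun z ↦ g x * chirp t z x := by
      unfold chirp
      fun_prop
    exact this.continuousAt.mono_left nhdsWithin_le_nhds

theorem exists_tendsto_chirpIntegral (hg : IsAmplitude p g) (ht : t ≠ 0) (ζ : ℂ) :
    ∃ L, Tendsto (fun z ↦ chirpIntegral t z g) (𝓝[{z | 0 < z.im}] ζ) (𝓝 L) := by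
  obtain ⟨k, hk⟩ := exists_nat_gt (p + 1)
  induction k generalizing p g with
  | zero => exact hg.exists_tendsto_chirpIntegral_of_lt (by simp at hk; linarith) t ζ
  | succ k ih =>
    push_cast at hk
    obtain ⟨L₀, hL₀⟩ := ih hg.div_id (by linarith)
    obtain ⟨L₁, hL₁⟩ := ih hg.div_id.deriv (by linarith)
    have hid : Tendsto (fun z : ℂ ↦ z) (𝓝[{z | 0 < z.im}] ζ) (𝓝 ζ) := nhdsWithin_le_nhds
    refine ⟨_, (((hL₁.const_mul Complex.I).sub (hid.mul hL₀)).div_const (2 * t : ℂ)).congr' ?_⟩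
    filter_upwards [self_mem_nhdsWithin] with z hz
    exact (hg.chirpIntegral_eq ht hz).symm

theorem exists_norm_chirpIntegral_le {b : ℝ} (hg : IsAmplitude p g) (hpb : p ≤ b) (hb : 0 < b)
    (hb1 : b < 1) :
    ∃ M, 0 ≤ M ∧ ∀ t ≠ 0, ∀ ζ : ℂ, 0 < ζ.im → ∀ A > 0, |ζ.re| / |t| ≤ A → √|t| ≤ |t| * A →
      ‖chirpIntegral t ζ g‖ ≤ M * A ^ b / √|t| := by
  obtain ⟨M, hM, hgM⟩ := hg.deriv.exists_norm_le_rpow (sub_le_sub_right hpb 1)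
  have hb1' : 0 < 1 - b := sub_pos.2 hb1
  refine ⟨M * (6 / b + 4 / (1 - b)), by positivity, fun t ht ζ hζ A hA hζA htA ↦ ?_⟩
  have : 0 < |t| := abs_pos.2 ht
  rw [hg.chirpIntegral_eq_integral_deriv_mul_chirpTail t hζ]
  refine (norm_integral_Ioi_le_of_norm_le_rpow (K₀ := M * (6 / √|t|)) (K₁ := M * (4 / |t|)) hb hb1
    hA (hg.deriv.integrableOn_mul_chirpTail t hζ) (fun x hx ↦ ?_) fun x hx ↦ ?_).trans ?_
  · rw [norm_mul, mul_right_comm]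
    gcongr
    exacts [by have := hx.1; positivity, hgM x hx.1, norm_chirpTail_le_inv_sqrt ht hζ hx.1.le]
  · have hx0 : 0 < x := hA.trans hx
    calc ‖deriv g x * chirpTail t ζ x‖ ≤ M * x ^ (b - 1) * (4 / (|t| * x)) := by
          rw [norm_mul]
          gcongr
          exacts [hgM x hx0, norm_chirpTail_le_inv ht hζ hx0 (hζA.trans (le_of_lt hx))]
      _ = M * (4 / |t|) * x ^ (b - 2) := by
          rw [show b - 2 = b - 1 - 1 by ring, Real.rpow_sub_one hx0.ne' (b - 1)]
          field_simp
  · calc M * (6 / √|t|) * (A ^ b / b) + M * (4 / |t|) * (A ^ (b - 1) / (1 - b))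
        = M * A ^ b * (6 / b * (1 / √|t|) + 4 / (1 - b) * (1 / (|t| * A))) := by
          rw [Real.rpow_sub_one hA.ne']
          field_simp
      _ ≤ M * A ^ b * (6 / b * (1 / √|t|) + 4 / (1 - b) * (1 / √|t|)) := by gcongr
      _ = M * (6 / b + 4 / (1 - b)) * A ^ b / √|t| := by ring

end IsAmplitude

theorem one_le_jbR (σ : ℝ) : 1 ≤ jbR σ :=
  Real.one_le_sqrt.2 (le_add_of_nonneg_right (sq_nonneg σ))

theorem abs_le_jbR (σ : ℝ) : |σ| ≤ jbR σ :=
  Real.abs_le_sqrt (le_add_of_nonneg_left zero_le_one)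

theorem norm_le_jbR_re {ζ : ℂ} (hζ : |ζ.im| ≤ 1) : ‖ζ‖ ≤ jbR ζ.re := by
  rw [Complex.norm_eq_sqrt_sq_add_sq, jbR, add_comm]
  gcongr
  exact (sq_le_one_iff_abs_le_one _).2 hζ

/-- Decay with exponent `b`, uniform up to the real axis: every oscillatory integral with an
amplitude of order at most `b` is `O(|t|^{-1/2} (⟨σ⟩ / |t|)^b)`, `σ` being the real part of the
frequency. -/
def HasChirpDecay (b : ℝ) : Prop :=
  ∀ p ≤ b, ∀ g, IsAmplitude p g → ∃ C, 0 ≤ C ∧ ∀ t ≠ 0, ∀ ζ : ℂ, 0 < ζ.im → ζ.im ≤ 1 →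
    ‖chirpIntegral t ζ g‖ ≤ C * (jbR ζ.re / |t|) ^ b / √|t|

namespace HasChirpDecay

theorem zero : HasChirpDecay 0 := by
  intro p hp g hg
  have hint : IntegrableOn (deriv g) (Ioi 0) := by
    rcases hp.lt_or_eq with hp | rfl
    · exact hg.deriv.integrableOn (by linarith)
    · exact (hg.deriv_of_order_zero (-2)).integrableOn (by norm_num)
  refine ⟨(∫ x in Ioi 0, ‖deriv g x‖) * 6, by positivity, fun t ht ζ hζ _ ↦ ?_⟩
  rw [hg.chirpIntegral_eq_integral_deriv_mul_chirpTail t hζ, rpow_zero, mul_one, mul_div_assoc,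
    ← integral_mul_const]
  refine norm_integral_le_of_norm_le (hint.norm.mul_const _) ?_
  filter_upwards [ae_restrict_mem measurableSet_Ioi] with x hx
  rw [norm_mul]
  gcongr
  exact norm_chirpTail_le_inv_sqrt ht hζ (le_of_lt hx)

theorem add_one {b : ℝ} (hb : HasChirpDecay b) : HasChirpDecay (b + 1) := by
  intro p hp g hg
  obtain ⟨C₀, hC₀, h₀⟩ := hb _ (by linarith) _ hg.div_id
  obtain ⟨C₁, hC₁, h₁⟩ := hb _ (by linarith) _ hg.div_id.deriv
  refine ⟨C₀ + C₁, by positivity, fun t ht ζ hζ hζ1 ↦ ?_⟩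
  have : 0 < |t| := abs_pos.2 ht
  have hj : 1 ≤ jbR ζ.re := one_le_jbR _
  have hζj : ‖ζ‖ ≤ jbR ζ.re := norm_le_jbR_re (by rwa [abs_of_pos hζ])
  set A := jbR ζ.re / |t| with hA
  have hA0 : 0 < A := by positivity
  calc ‖chirpIntegral t ζ g‖
      = ‖Complex.I * chirpIntegral t ζ (deriv fun x ↦ g x / x)
          - ζ * chirpIntegral t ζ fun x ↦ g x / x‖ / (2 * |t|) := by
        rw [hg.chirpIntegral_eq ht hζ, norm_div]
        simp
    _ ≤ (1 * (C₁ * A ^ b / √|t|) + jbR ζ.re * (C₀ * A ^ b / √|t|)) / (2 * |t|) := by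
        gcongr
        refine norm_sub_le_of_le ?_ ?_
        · rw [norm_mul, Complex.norm_I]
          gcongr
          exact h₁ t ht ζ hζ hζ1
        · rw [norm_mul]
          gcongr
          exact h₀ t ht ζ hζ hζ1
    _ ≤ (jbR ζ.re * (C₁ * A ^ b / √|t|) + jbR ζ.re * (C₀ * A ^ b / √|t|)) / (1 * |t|) := by
        gcongr
        norm_num
    _ = (C₀ + C₁) * A ^ (b + 1) / √|t| := by
        rw [Real.rpow_add_one hA0.ne', hA]
        ring

theorem of_pos_of_lt_one {b : ℝ} (hb : 0 < b) (hb1 : b < 1) : HasChirpDecay b := by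
  intro p hp g hg
  obtain ⟨C, hC, hsmall⟩ : ∃ C, 0 ≤ C ∧ ∀ t ≠ 0, ∀ ζ : ℂ, 0 < ζ.im → ζ.im ≤ 1 →
      ‖chirpIntegral t ζ g‖ ≤ C * (jbR ζ.re / |t|) ^ (1 : ℝ) / √|t| := by
    simpa using zero.add_one p (by linarith) g hg
  obtain ⟨M, hM, hlarge⟩ := hg.exists_norm_chirpIntegral_le hp hb hb1
  refine ⟨C + M, by positivity, fun t ht ζ hζ hζ1 ↦ ?_⟩
  have ht' : 0 < |t| := abs_pos.2 ht
  have hj : 1 ≤ jbR ζ.re := one_le_jbR _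
  set A := jbR ζ.re / |t| with hA
  have hA0 : 0 < A := by positivity
  rcases le_total (jbR ζ.re) |t| with htj | htj
  · have hA1 : A ≤ 1 := (div_le_one ht').2 htj
    calc ‖chirpIntegral t ζ g‖ ≤ C * A ^ (1 : ℝ) / √|t| := hsmall t ht ζ hζ hζ1
      _ ≤ C * A ^ b / √|t| := by
        gcongr ?_ * ?_ / _
        exact Real.rpow_le_rpow_of_exponent_ge hA0 hA1 hb1.le
      _ ≤ (C + M) * A ^ b / √|t| := by
        gcongr
        exact le_add_of_nonneg_right (by positivity)
  · have hsqrt : √|t| ≤ |t| * A := by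
      rw [hA, mul_div_cancel₀ _ ht'.ne']
      exact Real.sqrt_le_iff.2 ⟨by positivity, htj.trans (le_self_pow₀ hj two_ne_zero)⟩
    calc ‖chirpIntegral t ζ g‖ ≤ M * A ^ b / √|t| :=
          hlarge t ht ζ hζ A hA0 (by rw [hA]; gcongr; exact abs_le_jbR _) hsqrt
      _ ≤ (C + M) * A ^ b / √|t| := by
        gcongr
        exact le_add_of_nonneg_left hC

theorem of_nonneg {b : ℝ} (hb : 0 ≤ b) : HasChirpDecay b := by
  have hfract : HasChirpDecay (Int.fract b) := by
    rcases (Int.fract_nonneg b).eq_or_lt with h | h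
    · exact h ▸ zero
    · exact of_pos_of_lt_one h (Int.fract_lt_one b)
  have hadd : ∀ k : ℕ, HasChirpDecay (Int.fract b + k) := fun k ↦ by
    induction k with
    | zero => simpa using hfract
    | succ k ih => simpa [add_assoc] using ih.add_one
  have := hadd ⌊b⌋₊
  rwa [natCast_floor_eq_intCast_floor hb, Int.fract_add_floor] at this

end HasChirpDecay

theorem integral_exp_mul_exp_neg_mul_eq_chirpIntegral (t σ e : ℝ) (g : ℝ → ℂ) :
    ∫ x in Ioi (0 : ℝ), Complex.exp (Complex.I * (t * x ^ 2 + σ * x)) * Real.exp (-e * x) * g x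
      = chirpIntegral t (σ + Complex.I * e) g := by
  congr with x
  rw [mul_comm _ (g x), chirp, Complex.ofReal_exp, ← Complex.exp_add]
  congr 2
  push_cast
  linear_combination (-(e * x) : ℂ) * Complex.I_sq

theorem tendsto_ofReal_add_I_mul (σ : ℝ) :
    Tendsto (fun e : ℝ ↦ (σ + Complex.I * e : ℂ)) (𝓝[>] 0) (𝓝[{z | 0 < z.im}] σ) := by
  refine tendsto_nhdsWithin_iff.2 ⟨?_, ?_⟩
  · refine Tendsto.mono_left ?_ nhdsWithin_le_nhds
    have hcont : Continuous fun e : ℝ ↦ (σ + Complex.I * e : ℂ) := by fun_prop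
    simpa using hcont.tendsto 0
  · filter_upwards [self_mem_nhdsWithin] with e he
    simpa using he

theorem oscillatory_integral_bound_general {b : ℝ} (hb : 0 ≤ b) {g : ℝ → ℂ}
    (hg : IsAmplitude b g) :
    ∃ C : ℝ, 0 < C ∧ ∀ t : ℝ, t ≠ 0 → ∀ σ : ℝ,
      ∃ L : ℂ,
        Tendsto (fun e : ℝ ↦ ∫ x in Ioi (0 : ℝ),
          Complex.exp (Complex.I * (t * x ^ 2 + σ * x)) * Real.exp (-e * x) * g x)
          (𝓝[>] (0 : ℝ)) (𝓝 L) ∧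
        ‖L‖ ≤ C * |t| ^ (-(b + 1 / 2)) * jbR σ ^ b := by
  obtain ⟨C, hC, hbound⟩ := HasChirpDecay.of_nonneg hb b le_rfl g hg
  refine ⟨C + 1, by positivity, fun t ht σ ↦ ?_⟩
  have ht' : 0 < |t| := abs_pos.2 ht
  have hj : 0 < jbR σ := one_pos.trans_le (one_le_jbR σ)
  obtain ⟨L, hL⟩ := hg.exists_tendsto_chirpIntegral ht σ
  have hlim := hL.comp (tendsto_ofReal_add_I_mul σ)
  simp only [integral_exp_mul_exp_neg_mul_eq_chirpIntegral]
  refine ⟨L, hlim, ?_⟩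
  have hdecay : ‖L‖ ≤ C * (jbR σ / |t|) ^ b / √|t| := by
    refine le_of_tendsto hlim.norm ?_
    filter_upwards [Ioc_mem_nhdsGT zero_lt_one] with e he
    simpa using hbound t ht (σ + Complex.I * e) (by simpa using he.1) (by simpa using he.2)
  calc ‖L‖ ≤ C * (jbR σ / |t|) ^ b / √|t| := hdecay
    _ = C * |t| ^ (-(b + 1 / 2)) * jbR σ ^ b := by
      rw [Real.div_rpow hj.le ht'.le, Real.sqrt_eq_rpow, Real.rpow_neg ht'.le, Real.rpow_add ht']
      field_simp
    _ ≤ (C + 1) * |t| ^ (-(b + 1 / 2)) * jbR σ ^ b := by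
      gcongr
      exact le_add_of_nonneg_right zero_le_one

/-- **estimate (5.33).** For `n ≥ 4`, `a > 0` and a cutoff `χ_a`, the
(Abel-regularized) oscillatory integral `∫₀^∞ e^{itλ² + iσλ} λ^{(n-1)/2} χ_a(λ²) dλ`
exists and satisfies `|∫₀^∞ e^{itλ² + iσλ} λ^{(n-1)/2} χ_a(λ²) dλ| ≤ C |t|^{-n/2} ⟨σ⟩^{(n-1)/2}`
for all `t ≠ 0` and all `σ ∈ ℝ`, with `C` independent of `t` and `σ`. -/
theorem oscillatory_integral_bound
    (n : ℕ) (hn : 4 ≤ n) (a : ℝ) (ha : 0 < a) (χ : ℝ → ℝ) (hχ : IsChi a χ) :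
    ∃ C : ℝ, 0 < C ∧ ∀ t : ℝ, t ≠ 0 → ∀ σ : ℝ,
      ∃ L : ℂ,
        Tendsto (fun e : ℝ =>
            ∫ lam in Set.Ioi (0 : ℝ),
              Complex.exp (Complex.I * (t * lam ^ 2 + σ * lam)) *
                Real.exp (-e * lam) *
                ((lam ^ (((n : ℝ) - 1) / 2) * χ (lam ^ 2) : ℝ) : ℂ))
          (𝓝[>] (0 : ℝ)) (𝓝 L) ∧
        ‖L‖ ≤ C * |t| ^ (-(n : ℝ) / 2) * jbR σ ^ (((n : ℝ) - 1) / 2) := by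
  have hn' : (4 : ℝ) ≤ n := by exact_mod_cast hn
  rw [show -(n : ℝ) / 2 = -(((n : ℝ) - 1) / 2 + 1 / 2) by ring]
  exact oscillatory_integral_bound_general (by linarith) (hχ.isAmplitude_rpow_mul_sq ha _)
end
end
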